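/- arXiv:0708.1922 — 4 statements merged into one kernel-verified Lean document; each statement's English description precedes it below -/
import Mathlib

section
/- Let A, B, C be a positive solution of the SL(2,ℝ) negative cross curvature flow ODE system on [0, T) with B_0 > C_0 > 0, A_0 > 0, and suppose that at t = 0 the ratios a = A/B and c = C/B satisfy a < 1 - c + 2 sqrt(1 - c) and a > (1/3)(2 sqrt(1 - c + c^2) - 1 - c) (equivalently F_2(0) < 0 and F_1(0) < 0). Then these two inequalities, i.e. F_1 < 0 and F_2 < 0, hold for all t ∈ [0, T). -/
/-!
The region `{F1 < 0, F2 < 0, C < B}` of positive triples is forward invariant, by a first-exit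
argument. At a first exit time `τ` all three inequalities hold weakly.

* The face `B = C` is not reached: there `F2 = A² > 0`. Hence `B > C` and `F3 > 0` at `τ`.
* The corner `F1 = F2 = 0` is not reached: `F1 + F2 = -2A² - 2B² + 2C² - 4AB < 0` when `B > C`.
* On the face `F1 = 0`, `F2 < 0` one has `B' = C' = 0`, so
  `F1' = (∂F1/∂A) A'` is a positive multiple of `F2 F3`, hence negative, whereas a function that is
  negative before `τ` and vanishes at `τ` has nonnegative derivative there. The face `F2 = 0`,
  `F1 < 0` is excluded in the same way: there `A` and `C` are stationary, so only `B` moves.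
-/

/-- `F1 = -3A² + B² + C² - 2BC - 2AC - 2AB` for the `SL(2,ℝ)` cross curvature tensor. -/
def sl2F1 (A B C : ℝ) : ℝ :=
  -3 * A ^ 2 + B ^ 2 + C ^ 2 - 2 * B * C - 2 * A * C - 2 * A * B

/-- `F2 = -3B² + A² + C² + 2BC + 2AC - 2AB` for the `SL(2,ℝ)` cross curvature tensor. -/
def sl2F2 (A B C : ℝ) : ℝ :=
  -3 * B ^ 2 + A ^ 2 + C ^ 2 + 2 * B * C + 2 * A * C - 2 * A * B

/-- `F3 = -3C² + A² + B² + 2BC - 2AC + 2AB` for the `SL(2,ℝ)` cross curvature tensor. -/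
def sl2F3 (A B C : ℝ) : ℝ :=
  -3 * C ^ 2 + A ^ 2 + B ^ 2 + 2 * B * C - 2 * A * C + 2 * A * B

/-- A triple of functions solves the `SL(2,ℝ)` negative cross curvature flow ODE system
(with positivity) on a set `s ⊆ ℝ`. -/
def IsSolSL2 (A B C : ℝ → ℝ) (s : Set ℝ) : Prop :=
  ∀ t ∈ s,
    (0 < A t ∧ 0 < B t ∧ 0 < C t) ∧
    HasDerivAt A
      (-2 * A t * sl2F2 (A t) (B t) (C t) * sl2F3 (A t) (B t) (C t) /
        (A t * B t * C t) ^ 2) t ∧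
    HasDerivAt B
      (-2 * B t * sl2F3 (A t) (B t) (C t) * sl2F1 (A t) (B t) (C t) /
        (A t * B t * C t) ^ 2) t ∧
    HasDerivAt C
      (-2 * C t * sl2F1 (A t) (B t) (C t) * sl2F2 (A t) (B t) (C t) /
        (A t * B t * C t) ^ 2) t

lemma deriv_nonneg_of_neg_before {f : ℝ → ℝ} {d τ : ℝ} (hτ : 0 < τ)
    (hf : HasDerivAt f d τ) (hneg : ∀ s ∈ Set.Ico (0 : ℝ) τ, f s < 0) (h0 : f τ = 0) :
    0 ≤ d := by
  have h1 := (hasDerivWithinAt_iff_tendsto_slope' (s := Set.Iio τ) (by simp)).1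
    hf.hasDerivWithinAt
  refine ge_of_tendsto h1 ?_
  filter_upwards [Ioo_mem_nhdsLT hτ] with s hs
  have h2 := hneg s ⟨hs.1.le, hs.2⟩
  rw [slope_def_field, h0]
  exact div_nonneg_of_nonpos (by linarith) (by linarith [hs.2])

lemma sl2F1_hasDerivAt {A B C : ℝ → ℝ} {a b c t : ℝ} (hA : HasDerivAt A a t)
    (hB : HasDerivAt B b t) (hC : HasDerivAt C c t) :
    HasDerivAt (fun s => sl2F1 (A s) (B s) (C s))
      (a * (-6 * A t - 2 * B t - 2 * C t) + b * (2 * B t - 2 * C t - 2 * A t)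
        + c * (2 * C t - 2 * B t - 2 * A t)) t := by
  unfold sl2F1
  have h := ((((((hA.fun_pow 2).const_mul (-3)).fun_add (hB.fun_pow 2)).fun_add
    (hC.fun_pow 2)).fun_sub
    ((hB.const_mul 2).fun_mul hC)).fun_sub ((hA.const_mul 2).fun_mul hC)).fun_sub
    ((hA.const_mul 2).fun_mul hB)
  refine h.congr_deriv ?_
  push_cast
  ring

lemma sl2F2_hasDerivAt {A B C : ℝ → ℝ} {a b c t : ℝ} (hA : HasDerivAt A a t)
    (hB : HasDerivAt B b t) (hC : HasDerivAt C c t) :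
    HasDerivAt (fun s => sl2F2 (A s) (B s) (C s))
      (a * (2 * A t + 2 * C t - 2 * B t) + b * (-6 * B t + 2 * C t - 2 * A t)
        + c * (2 * C t + 2 * B t + 2 * A t)) t := by
  unfold sl2F2
  have h := ((((((hB.fun_pow 2).const_mul (-3)).fun_add (hA.fun_pow 2)).fun_add
    (hC.fun_pow 2)).fun_add
    ((hB.const_mul 2).fun_mul hC)).fun_add ((hA.const_mul 2).fun_mul hC)).fun_sub
    ((hA.const_mul 2).fun_mul hB)
  refine h.congr_deriv ?_
  push_cast
  ring

lemma sl2F3_pos {A B C : ℝ} (hA : 0 < A) (hB : 0 < B) (hC : 0 < C) (h : C < B) :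
    0 < sl2F3 A B C := by
  have h1 : sl2F3 A B C = (B - C) * (2 * A + B + 3 * C) + A ^ 2 := by unfold sl2F3; ring
  have h2 : 0 < B - C := sub_pos.2 h
  rw [h1]
  positivity

/-- The bound on `A / B` is the larger root of `F1 / B²` as a quadratic in `A / B`. -/
lemma sl2F1_neg_of_ratio {A B C : ℝ} (hB : 0 < B)
    (h : A / B > 1 / 3 * (2 * Real.sqrt (1 - C / B + (C / B) ^ 2) - 1 - C / B)) :
    sl2F1 A B C < 0 := by
  set a := A / B with ha
  set c := C / B with hc
  have hA : A = a * B := by rw [ha]; field_simp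
  have hC : C = c * B := by rw [hc]; field_simp
  have hr := Real.sqrt_nonneg (1 - c + c ^ 2)
  have hq := Real.sq_sqrt (show 0 ≤ 1 - c + c ^ 2 by nlinarith [sq_nonneg (c - 1 / 2)])
  set r := Real.sqrt (1 - c + c ^ 2)
  have e : sl2F1 A B C = B ^ 2 / 3 * ((2 * r) ^ 2 - (3 * a + 1 + c) ^ 2) := by
    rw [mul_pow, hq, hA, hC]; unfold sl2F1; ring
  rw [e]
  refine mul_neg_of_pos_of_neg (by positivity) ?_
  nlinarith

/-- The bound on `A / B` is the larger root of `F2 / B²` as a quadratic in `A / B`; positivity of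
`A` keeps `A / B` above the smaller root. -/
lemma sl2F2_neg_of_ratio {A B C : ℝ} (hA : 0 < A) (hC : 0 < C) (hBC : C < B)
    (h : A / B < 1 - C / B + 2 * Real.sqrt (1 - C / B)) :
    sl2F2 A B C < 0 := by
  have hB : 0 < B := hC.trans hBC
  have ha0 : 0 < A / B := by positivity
  have hc0 : 0 < C / B := by positivity
  have hc1 : C / B < 1 := (div_lt_one hB).2 hBC
  set a := A / B with ha
  set c := C / B with hc
  have hA : A = a * B := by rw [ha]; field_simp
  have hC : C = c * B := by rw [hc]; field_simp
  have hr := Real.sqrt_pos.2 (show 0 < 1 - c by linarith)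
  have hq := Real.sq_sqrt (show 0 ≤ 1 - c by linarith)
  set r := Real.sqrt (1 - c)
  have e : sl2F2 A B C = B ^ 2 * ((a + c - 1) ^ 2 - 4 * r ^ 2) := by
    rw [hq, hA, hC]; unfold sl2F2; ring
  rw [e]
  refine mul_neg_of_pos_of_neg (by positivity) ?_
  have hr1 : r < 1 := by nlinarith
  have h1 : 0 < 2 * r - (a + c - 1) := by linarith
  have h2 : 0 < 2 * r + (a + c - 1) := by nlinarith
  nlinarith [mul_pos h1 h2]

/-- No point of the boundary of the region can be reached for the first time at `τ`. -/
lemma sl2_no_first_exit {A B C : ℝ → ℝ} {T τ : ℝ} (hτ0 : 0 < τ) (hτT : τ < T)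
    (hsol : IsSolSL2 A B C (Set.Ico (0 : ℝ) T))
    (hb : ∀ s ∈ Set.Ico (0 : ℝ) τ, sl2F1 (A s) (B s) (C s) < 0 ∧
      sl2F2 (A s) (B s) (C s) < 0 ∧ C s - B s < 0) :
    sl2F1 (A τ) (B τ) (C τ) < 0 ∧ sl2F2 (A τ) (B τ) (C τ) < 0 ∧ C τ - B τ < 0 := by
  obtain ⟨⟨hA, hB, hC⟩, dA, dB, dC⟩ := hsol τ ⟨hτ0.le, hτT⟩
  have d1 := sl2F1_hasDerivAt dA dB dC
  have d2 := sl2F2_hasDerivAt dA dB dC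
  have hlim : ∀ f : ℝ → ℝ, ContinuousAt f τ → (∀ s ∈ Set.Ico (0 : ℝ) τ, f s < 0) → f τ ≤ 0 := by
    intro f hf hn
    refine le_of_tendsto (hf.tendsto.mono_left (nhdsWithin_le_nhds (s := Set.Iio τ))) ?_
    filter_upwards [Ioo_mem_nhdsLT hτ0] with s hs using (hn s ⟨hs.1.le, hs.2⟩).le
  have w1 := hlim _ d1.continuousAt fun s hs => (hb s hs).1
  have w2 := hlim _ d2.continuousAt fun s hs => (hb s hs).2.1
  have w3 := hlim (fun s => C s - B s) (dC.continuousAt.sub dB.continuousAt)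
    fun s hs => (hb s hs).2.2
  have h3 : C τ - B τ < 0 := by
    refine lt_of_le_of_ne w3 fun h => ?_
    have e : sl2F2 (A τ) (B τ) (C τ) = A τ ^ 2 := by
      rw [sub_eq_zero.1 h]; unfold sl2F2; ring
    rw [e] at w2
    exact absurd w2 (not_le.2 (by positivity))
  have hF3 := sl2F3_pos hA hB hC (sub_neg.1 h3)
  have hsum : sl2F1 (A τ) (B τ) (C τ) + sl2F2 (A τ) (B τ) (C τ) < 0 := by
    have e : sl2F1 (A τ) (B τ) (C τ) + sl2F2 (A τ) (B τ) (C τ)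
        = -(2 * A τ ^ 2 + 4 * A τ * B τ + 2 * ((B τ - C τ) * (B τ + C τ))) := by
      unfold sl2F1 sl2F2; ring
    have : 0 < B τ - C τ := by linarith
    rw [e, neg_lt_zero]
    positivity
  have hD : 0 < (A τ * B τ * C τ) ^ 2 := by positivity
  refine ⟨lt_of_le_of_ne w1 fun h => ?_, lt_of_le_of_ne w2 fun h => ?_, h3⟩
  · have hd := deriv_nonneg_of_neg_before hτ0 d1 (fun s hs => (hb s hs).1) h
    rw [h] at hd hsum
    have hF2 : 0 < -sl2F2 (A τ) (B τ) (C τ) := by linarith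
    have hpos : 0 < 2 * A τ * -sl2F2 (A τ) (B τ) (C τ) * sl2F3 (A τ) (B τ) (C τ) /
      (A τ * B τ * C τ) ^ 2 * (6 * A τ + 2 * B τ + 2 * C τ) := by positivity
    refine absurd hpos (not_lt.2 ?_)
    rw [← neg_nonneg]
    refine hd.trans_eq ?_
    ring
  · have hd := deriv_nonneg_of_neg_before hτ0 d2 (fun s hs => (hb s hs).2.1) h
    rw [h] at hd hsum
    have hF1 : 0 < -sl2F1 (A τ) (B τ) (C τ) := by linarith
    have hk : 0 < 6 * B τ - 2 * C τ + 2 * A τ := by linarith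
    have hpos : 0 < 2 * B τ * sl2F3 (A τ) (B τ) (C τ) * -sl2F1 (A τ) (B τ) (C τ) /
      (A τ * B τ * C τ) ^ 2 * (6 * B τ - 2 * C τ + 2 * A τ) := by positivity
    refine absurd hpos (not_lt.2 ?_)
    rw [← neg_nonneg]
    refine hd.trans_eq ?_
    ring

/-- Along a positive solution of the `SL(2,ℝ)` negative cross curvature flow on `[0, T)`
with `B0 > C0 > 0` and `A0 > 0`: if the initial data satisfies `F1(0) < 0` and
`F2(0) < 0` (equivalently, the ratios `a = A/B`, `c = C/B` satisfy
`a < 1 - c + 2√(1-c)` and `a > (1/3)(2√(1-c+c²) - 1 - c)` at `t = 0`), then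
`F1 < 0` and `F2 < 0` for all `t ∈ [0, T)`. -/
theorem sl2_F1F2_negative_preserved
    (T A0 B0 C0 : ℝ) (hT : 0 < T)
    (hA0 : 0 < A0) (hC0 : 0 < C0) (hB0C0 : B0 > C0)
    (A B C : ℝ → ℝ)
    (hinitA : A 0 = A0) (hinitB : B 0 = B0) (hinitC : C 0 = C0)
    (hsol : IsSolSL2 A B C (Set.Ico (0 : ℝ) T))
    (hF2_0 : A0 / B0 < 1 - C0 / B0 + 2 * Real.sqrt (1 - C0 / B0))
    (hF1_0 : A0 / B0 >
      1 / 3 * (2 * Real.sqrt (1 - C0 / B0 + (C0 / B0) ^ 2) - 1 - C0 / B0)) :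
    ∀ t ∈ Set.Ico (0 : ℝ) T,
      sl2F1 (A t) (B t) (C t) < 0 ∧ sl2F2 (A t) (B t) (C t) < 0 := by
  subst hinitA hinitB hinitC
  intro t ht
  -- The maximum is negative exactly when the three inequalities defining the region hold.
  set m : ℝ → ℝ := fun s => max (sl2F1 (A s) (B s) (C s))
    (max (sl2F2 (A s) (B s) (C s)) (C s - B s)) with hm
  have hiff : ∀ s, m s < 0 ↔ sl2F1 (A s) (B s) (C s) < 0 ∧
      sl2F2 (A s) (B s) (C s) < 0 ∧ C s - B s < 0 := by
    intro s
    simp only [hm, max_lt_iff]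
  suffices h : m t < 0 from ⟨((hiff t).1 h).1, ((hiff t).1 h).2.1⟩
  have hm0 : m 0 < 0 := (hiff 0).2 ⟨sl2F1_neg_of_ratio (hC0.trans hB0C0) hF1_0,
    sl2F2_neg_of_ratio hA0 hC0 hB0C0 hF2_0, sub_neg.2 hB0C0⟩
  by_contra hcon
  have hcont : ContinuousOn m (Set.Icc 0 t) := by
    intro s hs
    obtain ⟨-, dA, dB, dC⟩ := hsol s ⟨hs.1, hs.2.trans_lt ht.2⟩
    have hc : ContinuousAt m s := (sl2F1_hasDerivAt dA dB dC).continuousAt.max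
      ((sl2F2_hasDerivAt dA dB dC).continuousAt.max (dC.continuousAt.sub dB.continuousAt))
    exact hc.continuousWithinAt
  have hK : IsCompact (Set.Icc 0 t ∩ m ⁻¹' Set.Ici 0) :=
    isCompact_Icc.of_isClosed_subset (hcont.preimage_isClosed_of_isClosed isClosed_Icc isClosed_Ici)
      Set.inter_subset_left
  obtain ⟨τ, ⟨hτI, hτm⟩, hleast⟩ := hK.exists_isLeast ⟨t, ⟨ht.1, le_rfl⟩, not_lt.1 hcon⟩
  have hτ0 : 0 < τ := by
    refine lt_of_le_of_ne hτI.1 fun h => ?_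
    rw [← h] at hτm
    exact absurd hm0 (not_lt.2 hτm)
  refine absurd ((hiff τ).2 (sl2_no_first_exit hτ0 (hτI.2.trans_lt ht.2) hsol fun s hs => ?_))
    (not_lt.2 hτm)
  refine (hiff s).1 (not_le.1 fun h => ?_)
  exact absurd (hleast ⟨⟨hs.1, hs.2.le.trans hτI.2⟩, h⟩) (not_le.2 hs.2)
end

section
/- Let A, B, C be a maximal positive solution of the SL(2,ℝ) negative cross curvature flow ODE system with B_0 > C_0 > 0, A_0 > 0, and suppose that at t = 0 the ratios a = A/B and c = C/B satisfy a ≥ 1 - c + 2 sqrt(1 - c) (equivalently F_2(0) ≥ 0). Then there exists a time t_1 > 0 in the interval of existence at which F_1(t_1) < 0 and F_2(t_1) < 0; i.e., the condition F_2 ≥ 0 cannot persist for the whole interval of existence. -/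
/-- A maximal solution of the `SL(2,ℝ)` system on `{t | 0 ≤ t, t < T}` (`T ∈ (0,∞]` an
extended real): a solution admitting no extension to a strictly larger interval. -/
def IsMaxSolSL2 (A B C : ℝ → ℝ) (T : EReal) : Prop :=
  IsSolSL2 A B C {t : ℝ | 0 ≤ t ∧ (t : EReal) < T} ∧
  ∀ (A' B' C' : ℝ → ℝ) (T' : EReal), T < T' →
    IsSolSL2 A' B' C' {t : ℝ | 0 ≤ t ∧ (t : EReal) < T'} →
    ¬ (∀ t : ℝ, 0 ≤ t → (t : EReal) < T → A' t = A t ∧ B' t = B t ∧ C' t = C t)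

open Set Filter Topology

/-! ### Calculus on an interval -/

theorem le_of_hasDerivAt_nonneg {f f' : ℝ → ℝ} {a b : ℝ} (hab : a ≤ b)
    (h : ∀ t ∈ Icc a b, HasDerivAt f (f' t) t) (h0 : ∀ t ∈ Icc a b, 0 ≤ f' t) : f a ≤ f b := by
  refine monotoneOn_of_deriv_nonneg (convex_Icc a b)
    (fun t ht => (h t ht).continuousAt.continuousWithinAt)
    (fun t ht => (h t (interior_subset ht)).differentiableAt.differentiableWithinAt)
    (fun t ht => ?_) (left_mem_Icc.2 hab) (right_mem_Icc.2 hab) hab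
  rw [(h t (interior_subset ht)).deriv]
  exact h0 t (interior_subset ht)

theorem pos_of_ne_zero_on_Icc {f : ℝ → ℝ} {a b : ℝ} (hab : a ≤ b) (hf : ContinuousOn f (Icc a b))
    (ha : 0 < f a) (hne : ∀ t ∈ Icc a b, f t ≠ 0) : 0 < f b := by
  by_contra hb
  obtain ⟨t, ht, h0⟩ := intermediate_value_Icc' hab hf ⟨not_lt.1 hb, ha.le⟩
  exact hne t ht h0

/-- A solution of a linear equation `u' = g u` that starts positive stays positive: if `|g| ≤ M`
then `u² exp (2 M t)` is nondecreasing, so `u` never vanishes. -/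
theorem pos_of_linear_ode {u g : ℝ → ℝ} {a b : ℝ} (hab : a ≤ b) (hg : ContinuousOn g (Icc a b))
    (hu : ∀ t ∈ Icc a b, HasDerivAt u (g t * u t) t) (ha : 0 < u a) : 0 < u b := by
  obtain ⟨M, hM⟩ := isCompact_Icc.exists_bound_of_continuousOn hg
  refine pos_of_ne_zero_on_Icc hab (fun t ht => (hu t ht).continuousAt.continuousWithinAt) ha ?_
  intro s hs h0
  have hsub : Icc a s ⊆ Icc a b := Icc_subset_Icc_right hs.2
  have key : u a ^ 2 * Real.exp (2 * M * a) ≤ u s ^ 2 * Real.exp (2 * M * s) := by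
    refine le_of_hasDerivAt_nonneg (f := fun t => u t ^ 2 * Real.exp (2 * M * t))
      (f' := fun t => 2 * (g t + M) * u t ^ 2 * Real.exp (2 * M * t)) hs.1 ?_ ?_
    · intro t ht
      have h1 := ((hu t (hsub ht)).pow 2).mul (((hasDerivAt_id t).const_mul (2 * M)).exp)
      refine h1.congr_deriv ?_
      simp
      ring
    · intro t ht
      have h1 := hM t (hsub ht)
      rw [Real.norm_eq_abs] at h1
      have h2 : 0 ≤ g t + M := by linarith [neg_abs_le (g t)]
      positivity
  rw [h0] at key
  have : 0 < u a ^ 2 * Real.exp (2 * M * a) := by positivity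
  simp at key
  linarith

/-- A solution of an autonomous `C¹` equation with a limit at the finite end `T` of its interval
extends past `T`: glue it at `T` with a local solution through the limit point. -/
theorem exists_extension {E : Type*} [NormedAddCommGroup E] [NormedSpace ℝ E] [CompleteSpace E]
    {f : E → E} {x : E} (hf : ContDiffAt ℝ 1 f x) {y : ℝ → E} {T : ℝ} (hT : 0 < T)
    (hy : ∀ t, 0 ≤ t → t < T → HasDerivAt y (f (y t)) t) (hlim : Tendsto y (𝓝[<] T) (𝓝 x))
    {U : Set E} (hU : U ∈ 𝓝 x) (hyU : ∀ t, 0 ≤ t → t < T → y t ∈ U) :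
    ∃ T' > T, ∃ z : ℝ → E, (∀ t < T, z t = y t) ∧
      ∀ t, 0 ≤ t → t < T' → z t ∈ U ∧ HasDerivAt z (f (z t)) t := by
  obtain ⟨α, hα0, ε, hε, hα⟩ :=
    hf.exists_forall_mem_closedBall_exists_eq_forall_mem_Ioo_hasDerivAt₀ T
  have hαc : ContinuousAt α T := (hα T ⟨by linarith, by linarith⟩).continuousAt
  obtain ⟨δ, hδ, hαU⟩ := Metric.eventually_nhds_iff.1
    (hαc.eventually_mem (by rw [hα0]; exact hU))
  let z : ℝ → E := fun t => if t < T then y t else α t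
  have zlt : ∀ t < T, z t = y t := fun t ht => if_pos ht
  have zge : ∀ t, T ≤ t → z t = α t := fun t ht => if_neg (not_lt.2 ht)
  have zT : z T = x := by rw [zge T le_rfl, hα0]
  have evlt : ∀ t < T, z =ᶠ[𝓝 t] y := fun t ht =>
    (eventually_lt_nhds ht).mono fun s hs => zlt s hs
  have hzlt : ∀ t, 0 ≤ t → t < T → HasDerivAt z (f (z t)) t := by
    intro t h0 ht
    rw [zlt t ht]
    exact (hy t h0 ht).congr_of_eventuallyEq (evlt t ht)
  have hzlim : Tendsto z (𝓝[<] T) (𝓝 x) :=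
    hlim.congr' (eventually_nhdsWithin_of_forall fun t ht => (zlt t ht).symm)
  have hIoo : Ioo 0 T ∈ 𝓝[<] T := Ioo_mem_nhdsLT hT
  refine ⟨T + min ε δ, by have := lt_min hε hδ; linarith, z, zlt, ?_⟩
  intro t h0 ht
  have h1 : t < T + ε := by linarith [min_le_left ε δ]
  have h2 : t < T + δ := by linarith [min_le_right ε δ]
  rcases lt_trichotomy t T with h | h | h
  · exact ⟨by rw [zlt t h]; exact hyU t h0 h, hzlt t h0 h⟩
  · subst h
    refine ⟨by rw [zT]; exact mem_of_mem_nhds hU, ?_⟩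
    rw [zT]
    -- the left derivative is the limit of the derivatives, by continuity of `f` at `x`
    have hl : HasDerivWithinAt z (f x) (Iic t) t := by
      refine hasDerivWithinAt_Iic_of_tendsto_deriv (s := Ioo 0 t)
        (fun s hs => (hzlt s hs.1.le hs.2).differentiableAt.differentiableWithinAt) ?_ hIoo ?_
      · unfold ContinuousWithinAt
        rw [zT]
        exact hzlim.mono_left (nhdsWithin_mono _ fun s hs => hs.2)
      · refine (hf.continuousAt.tendsto.comp hzlim).congr' ?_
        filter_upwards [hIoo] with s hs
        exact (hzlt s hs.1.le hs.2).deriv.symm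
    have hr : HasDerivWithinAt z (f x) (Ici t) t := by
      have h3 := (hα t ⟨by linarith, h1⟩).hasDerivWithinAt (s := Ici t)
      rw [hα0] at h3
      exact h3.congr (fun s hs => zge s hs) (zge t le_rfl)
    have := hl.union hr
    rwa [Iic_union_Ici, hasDerivWithinAt_univ] at this
  · have hev : z =ᶠ[𝓝 t] α := (eventually_gt_nhds h).mono fun s hs => zge s hs.le
    rw [zge t h.le]
    refine ⟨hαU ?_, (hα t ⟨by linarith, h1⟩).congr_of_eventuallyEq hev⟩
    rw [Real.dist_eq, abs_lt]
    constructor <;> linarith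

/-! ### The cross curvature quantities -/

theorem sl2F3_pos_s15 {a b c : ℝ} (ha : 0 < a) (hc : 0 < c) (hbc : c < b) : 0 < sl2F3 a b c := by
  unfold sl2F3
  nlinarith [mul_pos ha (sub_pos.2 hbc), mul_pos hc (sub_pos.2 hbc), sq_pos_of_pos ha,
    mul_pos (sub_pos.2 hbc) (sub_pos.2 hbc)]

theorem sl2F1_add_sl2F2_lt {a b c : ℝ} (ha : 0 < a) (hc : 0 < c) (hbc : c < b) :
    sl2F1 a b c + sl2F2 a b c < -2 * a ^ 2 := by
  unfold sl2F1 sl2F2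
  nlinarith [mul_pos ha (hc.trans hbc), mul_pos (sub_pos.2 hbc) (add_pos hc (hc.trans hbc))]

theorem bounds_of_F2_nonneg {a b c : ℝ} (ha : 0 < a) (hc : 0 < c) (hbc : c < b)
    (h : 0 ≤ sl2F2 a b c) : b - c < a ∧ 4 * b * (b - c) ≤ a ^ 2 := by
  have h1 : 4 * b * (b - c) ≤ (a - (b - c)) ^ 2 := by
    unfold sl2F2 at h
    nlinarith
  have h2 : b - c < a := by
    by_contra hcon
    nlinarith [mul_pos (sub_pos.2 hbc) (sub_pos.2 hbc), mul_pos (sub_pos.2 hbc) hc,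
      mul_nonneg ha.le (sub_nonneg.2 (not_lt.1 hcon))]
  exact ⟨h2, by nlinarith⟩

/-- The lower bound `1 - c + 2√(1 - c)` on the ratio `a` implies `F2 ≥ 0`. -/
theorem sl2F2_nonneg_of_ratio {a b c : ℝ} (hc : 0 < c) (hbc : c < b)
    (h : a / b ≥ 1 - c / b + 2 * Real.sqrt (1 - c / b)) : 0 ≤ sl2F2 a b c := by
  have hb : 0 < b := hc.trans hbc
  have h1 : 0 ≤ 1 - c / b := by
    rw [sub_nonneg, div_le_one hb]
    exact hbc.le
  have h2 := Real.sq_sqrt h1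
  have h3 := Real.sqrt_nonneg (1 - c / b)
  have h4 : sl2F2 a b c = b ^ 2 * ((a / b - (1 - c / b)) ^ 2 - 4 * (1 - c / b)) := by
    unfold sl2F2
    field_simp
    ring
  rw [h4]
  have h5 : 4 * (1 - c / b) ≤ (a / b - (1 - c / b)) ^ 2 := by nlinarith
  exact mul_nonneg (sq_nonneg b) (sub_nonneg.2 h5)

/-- The right-hand side of the system, as a vector field on `ℝ³`. -/
noncomputable def sl2Field (p : ℝ × ℝ × ℝ) : ℝ × ℝ × ℝ :=
  (-2 * p.1 * sl2F2 p.1 p.2.1 p.2.2 * sl2F3 p.1 p.2.1 p.2.2 / (p.1 * p.2.1 * p.2.2) ^ 2,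
    -2 * p.2.1 * sl2F3 p.1 p.2.1 p.2.2 * sl2F1 p.1 p.2.1 p.2.2 / (p.1 * p.2.1 * p.2.2) ^ 2,
    -2 * p.2.2 * sl2F1 p.1 p.2.1 p.2.2 * sl2F2 p.1 p.2.1 p.2.2 / (p.1 * p.2.1 * p.2.2) ^ 2)

theorem contDiffAt_sl2Field {p : ℝ × ℝ × ℝ} (h1 : 0 < p.1) (h2 : 0 < p.2.1) (h3 : 0 < p.2.2) :
    ContDiffAt ℝ 1 sl2Field p := by
  have h : (p.1 * p.2.1 * p.2.2) ^ 2 ≠ 0 := by positivity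
  unfold sl2Field sl2F1 sl2F2 sl2F3
  refine ContDiffAt.prodMk ?_ (ContDiffAt.prodMk ?_ ?_) <;>
    exact ContDiffAt.div (by fun_prop) (by fun_prop) h

/-! ### Behaviour of solutions -/

/-- The coefficient `g` in the linear equation `(B - C)' = g (B - C)`. -/
noncomputable def sl2G (a b c : ℝ) : ℝ :=
  -2 * sl2F1 a b c * (a ^ 2 + b ^ 2 + c ^ 2 + 6 * b * c + 2 * a * (b + c)) / (a * b * c) ^ 2

theorem IsSolSL2.hasDerivAt_sub {A B C : ℝ → ℝ} {s : Set ℝ} (h : IsSolSL2 A B C s) {t : ℝ}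
    (ht : t ∈ s) :
    HasDerivAt (fun t => B t - C t) (sl2G (A t) (B t) (C t) * (B t - C t)) t := by
  obtain ⟨-, -, hB, hC⟩ := h t ht
  refine (hB.sub hC).congr_deriv ?_
  unfold sl2G sl2F1 sl2F2 sl2F3
  ring

theorem IsSolSL2.C_lt_B {A B C : ℝ → ℝ} {b : ℝ} (hb : 0 ≤ b) (h : IsSolSL2 A B C (Icc 0 b))
    (h0 : C 0 < B 0) : C b < B b := by
  have hA : ContinuousOn A (Icc 0 b) := fun t ht => (h t ht).2.1.continuousAt.continuousWithinAt
  have hB : ContinuousOn B (Icc 0 b) := fun t ht => (h t ht).2.2.1.continuousAt.continuousWithinAt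
  have hC : ContinuousOn C (Icc 0 b) := fun t ht => (h t ht).2.2.2.continuousAt.continuousWithinAt
  refine sub_pos.1 (pos_of_linear_ode (u := fun t => B t - C t)
    (g := fun t => sl2G (A t) (B t) (C t)) hb ?_ (fun t ht => h.hasDerivAt_sub ht)
    (sub_pos.2 h0))
  unfold sl2G sl2F1
  refine ContinuousOn.div (by fun_prop) (by fun_prop) fun t ht => ?_
  obtain ⟨⟨h1, h2, h3⟩, -⟩ := h t ht
  positivity

/-- If `F1` and `F2` are never simultaneously negative and `F2 ≥ 0` initially, then `F2 - F1` never
vanishes, so `F2 ≥ 0 > F1` persists. -/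
theorem IsSolSL2.signs {A B C : ℝ → ℝ} {b : ℝ} (hb : 0 ≤ b) (h : IsSolSL2 A B C (Icc 0 b))
    (h0 : C 0 < B 0) (hF : 0 ≤ sl2F2 (A 0) (B 0) (C 0))
    (hn : ∀ t ∈ Ioc 0 b, ¬ (sl2F1 (A t) (B t) (C t) < 0 ∧ sl2F2 (A t) (B t) (C t) < 0)) :
    sl2F1 (A b) (B b) (C b) < 0 ∧ 0 ≤ sl2F2 (A b) (B b) (C b) := by
  have hA : ContinuousOn A (Icc 0 b) := fun t ht => (h t ht).2.1.continuousAt.continuousWithinAt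
  have hB : ContinuousOn B (Icc 0 b) := fun t ht => (h t ht).2.2.1.continuousAt.continuousWithinAt
  have hC : ContinuousOn C (Icc 0 b) := fun t ht => (h t ht).2.2.2.continuousAt.continuousWithinAt
  have hsum : ∀ t ∈ Icc 0 b, sl2F1 (A t) (B t) (C t) + sl2F2 (A t) (B t) (C t) < 0 := by
    intro t ht
    obtain ⟨⟨h1, h2, h3⟩, -⟩ := h t ht
    have hlt : C t < B t :=
      IsSolSL2.C_lt_B ht.1 (fun s hs => h s ⟨hs.1, hs.2.trans ht.2⟩) h0
    have := sl2F1_add_sl2F2_lt h1 h3 hlt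
    nlinarith
  have hn' : ∀ t ∈ Icc 0 b,
      ¬ (sl2F1 (A t) (B t) (C t) < 0 ∧ sl2F2 (A t) (B t) (C t) < 0) := by
    intro t ht
    rcases ht.1.eq_or_lt with h0 | h0
    · rw [← h0]
      exact fun hh => absurd hF (not_le.2 hh.2)
    · exact hn t ⟨h0, ht.2⟩
  have hpos : 0 < sl2F2 (A b) (B b) (C b) - sl2F1 (A b) (B b) (C b) := by
    refine pos_of_ne_zero_on_Icc
      (f := fun t => sl2F2 (A t) (B t) (C t) - sl2F1 (A t) (B t) (C t)) hb ?_ ?_ ?_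
    · unfold sl2F1 sl2F2
      fun_prop
    · have := hsum 0 (left_mem_Icc.2 hb)
      linarith
    · intro t ht he
      have := hsum t ht
      exact hn' t ht ⟨by linarith, by linarith⟩
  have hs := hsum b (right_mem_Icc.2 hb)
  have hf1 : sl2F1 (A b) (B b) (C b) < 0 := by linarith
  exact ⟨hf1, not_lt.1 fun hh => hn' b (right_mem_Icc.2 hb) ⟨hf1, hh⟩⟩

/-- The monotonicity of `A`, `B`, `C` and `B - C` while `F1 < 0 ≤ F2` and `C < B`. -/
theorem IsSolSL2.monotone {A B C : ℝ → ℝ} {a b : ℝ} (hab : a ≤ b) (h : IsSolSL2 A B C (Icc a b))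
    (hlt : ∀ t ∈ Icc a b, C t < B t)
    (hs : ∀ t ∈ Icc a b, sl2F1 (A t) (B t) (C t) < 0 ∧ 0 ≤ sl2F2 (A t) (B t) (C t)) :
    A b ≤ A a ∧ B a ≤ B b ∧ C a ≤ C b ∧ B a - C a ≤ B b - C b := by
  have hF3 : ∀ t ∈ Icc a b, 0 < sl2F3 (A t) (B t) (C t) := fun t ht =>
    sl2F3_pos_s15 (h t ht).1.1 (h t ht).1.2.2 (hlt t ht)
  refine ⟨?_, ?_, ?_, ?_⟩
  · refine neg_le_neg_iff.1 (le_of_hasDerivAt_nonneg (f := fun t => -A t) hab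
      (fun t ht => (h t ht).2.1.neg) fun t ht => ?_)
    have e : -(-2 * A t * sl2F2 (A t) (B t) (C t) * sl2F3 (A t) (B t) (C t) /
        (A t * B t * C t) ^ 2) = 2 * A t * sl2F2 (A t) (B t) (C t) *
        sl2F3 (A t) (B t) (C t) / (A t * B t * C t) ^ 2 := by ring
    rw [e]
    have h1 := (h t ht).1.1.le
    have h2 := (hs t ht).2
    have h3 := (hF3 t ht).le
    positivity
  · refine le_of_hasDerivAt_nonneg hab (fun t ht => (h t ht).2.2.1) fun t ht => ?_
    have e : -2 * B t * sl2F3 (A t) (B t) (C t) * sl2F1 (A t) (B t) (C t) /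
        (A t * B t * C t) ^ 2 = 2 * B t * sl2F3 (A t) (B t) (C t) *
        (-sl2F1 (A t) (B t) (C t)) / (A t * B t * C t) ^ 2 := by ring
    rw [e]
    have h1 := (h t ht).1.2.1.le
    have h2 := (neg_pos.2 (hs t ht).1).le
    have h3 := (hF3 t ht).le
    positivity
  · refine le_of_hasDerivAt_nonneg hab (fun t ht => (h t ht).2.2.2) fun t ht => ?_
    have e : -2 * C t * sl2F1 (A t) (B t) (C t) * sl2F2 (A t) (B t) (C t) /
        (A t * B t * C t) ^ 2 = 2 * C t * (-sl2F1 (A t) (B t) (C t)) *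
        sl2F2 (A t) (B t) (C t) / (A t * B t * C t) ^ 2 := by ring
    rw [e]
    have h1 := (h t ht).1.2.2.le
    have h2 := (neg_pos.2 (hs t ht).1).le
    have h3 := (hs t ht).2
    positivity
  · refine le_of_hasDerivAt_nonneg (f := fun t => B t - C t) hab
      (fun t ht => h.hasDerivAt_sub ht) fun t ht => ?_
    have e : sl2G (A t) (B t) (C t) = 2 * (-sl2F1 (A t) (B t) (C t)) *
        (A t ^ 2 + B t ^ 2 + C t ^ 2 + 6 * B t * C t + 2 * A t * (B t + C t)) /
        (A t * B t * C t) ^ 2 := by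
      unfold sl2G
      ring
    rw [e]
    obtain ⟨⟨h1, h2, h3⟩, -⟩ := h t ht
    have h4 := (neg_pos.2 (hs t ht).1).le
    have h5 := (sub_pos.2 (hlt t ht)).le
    positivity

/-- A uniform lower bound for `(B - C)'`, from `-F1 ≥ 2 A²` and `Q ≥ A²`. -/
theorem sl2G_mul_lower {a b c d M : ℝ} (hc : 0 < c) (hbc : c < b) (hd : 0 < d)
    (hda : d ≤ a) (hdu : d ≤ b - c) (hbM : b ≤ M) (hF2 : 0 ≤ sl2F2 a b c) :
    4 * d ^ 3 / M ^ 4 ≤ sl2G a b c * (b - c) := by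
  have ha : 0 < a := hd.trans_le hda
  have hb : 0 < b := hc.trans hbc
  have hM : 0 < M := hb.trans_le hbM
  have hF1 : 2 * a ^ 2 ≤ -sl2F1 a b c := by
    have := sl2F1_add_sl2F2_lt ha hc hbc
    linarith
  have hQ : a ^ 2 ≤ a ^ 2 + b ^ 2 + c ^ 2 + 6 * b * c + 2 * a * (b + c) := by
    have : 0 ≤ b ^ 2 + c ^ 2 + 6 * b * c + 2 * a * (b + c) := by positivity
    linarith
  have e : sl2G a b c = 2 * ((-sl2F1 a b c) *
      (a ^ 2 + b ^ 2 + c ^ 2 + 6 * b * c + 2 * a * (b + c))) / (a * b * c) ^ 2 := by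
    unfold sl2G
    ring
  calc 4 * d ^ 3 / M ^ 4 ≤ 4 * d ^ 3 / (b * c) ^ 2 := by
        gcongr
        have h1 : b * c ≤ M * M := by
          have : c ≤ M := hbc.le.trans hbM
          gcongr
        calc (b * c) ^ 2 ≤ (M * M) ^ 2 := by gcongr
          _ = M ^ 4 := by ring
    _ = 4 * d ^ 2 / (b * c) ^ 2 * d := by ring
    _ ≤ 4 * a ^ 2 / (b * c) ^ 2 * (b - c) := by gcongr
    _ = 2 * (2 * a ^ 2 * a ^ 2) / (a * b * c) ^ 2 * (b - c) := by
        field_simp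
        ring
    _ ≤ sl2G a b c * (b - c) := by
        rw [e]
        have := hd.trans_le hdu
        have : 0 ≤ -sl2F1 a b c := le_trans (by positivity) hF1
        gcongr

/-- A nondecreasing function on `[0, T)` with values in `[m, M]` has a limit at `T`, at least
`m`. -/
theorem exists_limit_of_monotone {f : ℝ → ℝ} {T m M : ℝ} (hT : 0 < T)
    (hf : ∀ s t, 0 ≤ s → s ≤ t → t < T → f s ≤ f t) (hm : ∀ t, 0 ≤ t → t < T → m ≤ f t)
    (hM : ∀ t, 0 ≤ t → t < T → f t ≤ M) :
    ∃ l, Tendsto f (𝓝[<] T) (𝓝 l) ∧ m ≤ l ∧ l ≤ M := by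
  have hlim := MonotoneOn.tendsto_nhdsWithin_Ioo_left (f := f) (nonempty_Ioo.2 hT)
    (fun s hs t ht hst => hf s t hs.1.le hst ht.2)
    ⟨M, by rintro _ ⟨t, ht, rfl⟩; exact hM t ht.1.le ht.2⟩
  have hev : Ioo 0 T ∈ 𝓝[<] T := Ioo_mem_nhdsLT hT
  refine ⟨_, hlim, ge_of_tendsto hlim ?_, le_of_tendsto hlim ?_⟩
  · filter_upwards [hev] with t ht using hm t ht.1.le ht.2
  · filter_upwards [hev] with t ht using hM t ht.1.le ht.2

/-- For a maximal positive solution of the `SL(2,ℝ)` negative cross curvature flow with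
`B0 > C0 > 0`, `A0 > 0` and initial ratios `a = A0/B0`, `c = C0/B0` satisfying
`a ≥ 1 - c + 2√(1-c)` (equivalently `F2(0) ≥ 0`): there is a time `t1 > 0` in the
interval of existence at which `F1(t1) < 0` and `F2(t1) < 0`; i.e. the condition
`F2 ≥ 0` cannot persist. -/
theorem sl2_F2_nonneg_not_persistent
    (A0 B0 C0 : ℝ) (hA0 : 0 < A0) (hC0 : 0 < C0) (hB0C0 : B0 > C0)
    (A B C : ℝ → ℝ) (T : EReal) (hT : 0 < T)
    (hmax : IsMaxSolSL2 A B C T)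
    (hinitA : A 0 = A0) (hinitB : B 0 = B0) (hinitC : C 0 = C0)
    (hF2_0 : A0 / B0 ≥ 1 - C0 / B0 + 2 * Real.sqrt (1 - C0 / B0)) :
    ∃ t1 : ℝ, 0 < t1 ∧ (t1 : EReal) < T ∧
      sl2F1 (A t1) (B t1) (C t1) < 0 ∧ sl2F2 (A t1) (B t1) (C t1) < 0 := by
  subst hinitA hinitB hinitC
  by_contra hcon
  have hn : ∀ t : ℝ, 0 < t → (t : EReal) < T →
      ¬ (sl2F1 (A t) (B t) (C t) < 0 ∧ sl2F2 (A t) (B t) (C t) < 0) :=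
    fun t h0 ht hh => hcon ⟨t, h0, ht, hh.1, hh.2⟩
  obtain ⟨hsol, hext⟩ := hmax
  have lt_T : ∀ {s t : ℝ}, s ≤ t → (t : EReal) < T → (s : EReal) < T := fun hst ht =>
    (EReal.coe_le_coe_iff.2 hst).trans_lt ht
  have hsolI : ∀ a b : ℝ, 0 ≤ a → (b : EReal) < T → IsSolSL2 A B C (Icc a b) :=
    fun a b ha hb t ht => hsol t ⟨ha.trans ht.1, lt_T ht.2 hb⟩
  have hF2 := sl2F2_nonneg_of_ratio hC0 hB0C0 hF2_0
  have hCB : ∀ t : ℝ, 0 ≤ t → (t : EReal) < T → C t < B t := fun t h0 ht =>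
    (hsolI 0 t le_rfl ht).C_lt_B h0 hB0C0
  have hsg : ∀ t : ℝ, 0 ≤ t → (t : EReal) < T →
      sl2F1 (A t) (B t) (C t) < 0 ∧ 0 ≤ sl2F2 (A t) (B t) (C t) := fun t h0 ht =>
    (hsolI 0 t le_rfl ht).signs h0 hB0C0 hF2 fun s hs => hn s hs.1 (lt_T hs.2 ht)
  have hmono : ∀ s t : ℝ, 0 ≤ s → s ≤ t → (t : EReal) < T →
      A t ≤ A s ∧ B s ≤ B t ∧ C s ≤ C t ∧ B s - C s ≤ B t - C t := fun s t h0 hst ht =>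
    (hsolI s t h0 ht).monotone hst
      (fun r hr => hCB r (h0.trans hr.1) (lt_T hr.2 ht))
      (fun r hr => hsg r (h0.trans hr.1) (lt_T hr.2 ht))
  obtain ⟨d, hd⟩ : ∃ d, d = B 0 - C 0 := ⟨_, rfl⟩
  have hdpos : 0 < d := by rw [hd]; exact sub_pos.2 hB0C0
  obtain ⟨M, hM⟩ : ∃ M, M = A 0 ^ 2 / (4 * d) := ⟨_, rfl⟩
  have hbd : ∀ t : ℝ, 0 ≤ t → (t : EReal) < T → d ≤ A t ∧ d ≤ B t - C t ∧ B t ≤ M := by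
    intro t h0 ht
    obtain ⟨⟨h1, h2, h3⟩, -⟩ := hsol t ⟨h0, ht⟩
    obtain ⟨m1, -, -, m4⟩ := hmono 0 t le_rfl h0 ht
    obtain ⟨b1, b2⟩ := bounds_of_F2_nonneg h1 h3 (hCB t h0 ht) (hsg t h0 ht).2
    refine ⟨by linarith, by linarith, ?_⟩
    rw [hM, le_div_iff₀ (by positivity)]
    calc B t * (4 * d) ≤ B t * (4 * (B t - C t)) := by gcongr; linarith
      _ = 4 * B t * (B t - C t) := by ring
      _ ≤ A t ^ 2 := b2
      _ ≤ A 0 ^ 2 := by gcongr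
  induction T using EReal.rec with
  | bot => exact absurd hT (not_lt.2 bot_le)
  | coe T =>
    simp only [EReal.coe_lt_coe_iff] at *
    have hTpos : 0 < T := by exact_mod_cast hT
    obtain ⟨lA, tA, -, pA⟩ := exists_limit_of_monotone (f := fun t => -A t) (m := -A 0) (M := -d)
      hTpos (fun s t h0 hst ht => neg_le_neg (hmono s t h0 hst ht).1)
      (fun t h0 ht => neg_le_neg (hmono 0 t le_rfl h0 ht).1)
      (fun t h0 ht => neg_le_neg (hbd t h0 ht).1)
    obtain ⟨lB, tB, pB, -⟩ := exists_limit_of_monotone (f := B) (m := B 0) (M := M)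
      hTpos (fun s t h0 hst ht => (hmono s t h0 hst ht).2.1)
      (fun t h0 ht => (hmono 0 t le_rfl h0 ht).2.1)
      (fun t h0 ht => (hbd t h0 ht).2.2)
    obtain ⟨lC, tC, pC, -⟩ := exists_limit_of_monotone (f := C) (m := C 0) (M := M)
      hTpos (fun s t h0 hst ht => (hmono s t h0 hst ht).2.2.1)
      (fun t h0 ht => (hmono 0 t le_rfl h0 ht).2.2.1)
      (fun t h0 ht => (hCB t h0 ht).le.trans (hbd t h0 ht).2.2)
    have tA' : Tendsto A (𝓝[<] T) (𝓝 (-lA)) := by simpa using tA.neg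
    have qA : 0 < -lA := by linarith
    have qB : 0 < lB := by linarith
    have qC : 0 < lC := by linarith
    let U : Set (ℝ × ℝ × ℝ) := {p | 0 < p.1 ∧ 0 < p.2.1 ∧ 0 < p.2.2}
    have hU : IsOpen U :=
      (isOpen_lt continuous_const continuous_fst).inter
        ((isOpen_lt continuous_const (continuous_fst.comp continuous_snd)).inter
          (isOpen_lt continuous_const (continuous_snd.comp continuous_snd)))
    obtain ⟨T', hT', z, hz, hz'⟩ := exists_extension
      (contDiffAt_sl2Field (p := (-lA, lB, lC)) qA qB qC) (y := fun t => (A t, B t, C t)) hTpos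
      (fun t h0 ht => by
        obtain ⟨-, dA, dB, dC⟩ := hsol t ⟨h0, ht⟩
        exact dA.prodMk (dB.prodMk dC))
      (tA'.prodMk_nhds (tB.prodMk_nhds tC)) (hU.mem_nhds ⟨qA, qB, qC⟩)
      (fun t h0 ht => (hsol t ⟨h0, ht⟩).1)
    refine hext (fun t => (z t).1) (fun t => (z t).2.1) (fun t => (z t).2.2) T'
      (EReal.coe_lt_coe_iff.2 hT') ?_ ?_
    · rintro t ⟨h0, ht⟩
      obtain ⟨hp, hd⟩ := hz' t h0 (EReal.coe_lt_coe_iff.1 ht)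
      refine ⟨hp, ?_, ?_, ?_⟩
      · exact hd.fst
      · exact hd.snd.fst
      · exact hd.snd.snd
    · intro t _ ht
      simp [hz t ht]
  | top =>
    have hlt : ∀ t : ℝ, (t : EReal) < ⊤ := EReal.coe_lt_top
    have hMpos : 0 < M := by rw [hM]; positivity
    obtain ⟨κ, hκ⟩ : ∃ κ, κ = 4 * d ^ 3 / M ^ 4 := ⟨_, rfl⟩
    have hκpos : 0 < κ := by rw [hκ]; positivity
    have hgrow : ∀ t : ℝ, 0 ≤ t → B 0 - C 0 - κ * 0 ≤ B t - C t - κ * t := by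
      intro t h0
      refine le_of_hasDerivAt_nonneg (f := fun t => B t - C t - κ * t) h0
        (fun s hs => ((hsolI 0 t le_rfl (hlt t)).hasDerivAt_sub hs).sub
          ((hasDerivAt_id s).const_mul κ)) fun s hs => ?_
      obtain ⟨⟨h1, h2, h3⟩, -⟩ := hsol s ⟨hs.1, hlt s⟩
      obtain ⟨b1, b2, b3⟩ := hbd s hs.1 (hlt s)
      have := sl2G_mul_lower h3 (hCB s hs.1 (hlt s)) hdpos b1 b2 b3 (hsg s hs.1 (hlt s)).2
      rw [← hκ] at this
      simp only [mul_one]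
      linarith
    have ht : 0 ≤ M / κ := by positivity
    have h1 := hgrow (M / κ) ht
    have h2 := (hbd (M / κ) ht (hlt _)).2.2
    have h3 := (hsol (M / κ) ⟨ht, hlt _⟩).1.2.2
    rw [mul_div_cancel₀ _ hκpos.ne'] at h1
    linarith
end

section
/- For any initial data A_0, B_0, C_0 > 0 with B_0 > C_0, there exists a finite time T_0 > 0 such that the SL(2,ℝ) negative cross curvature flow ODE system has a positive solution on [0, T_0), which is maximal; moreover, as t → T_0^-, C(t)/(8 sqrt(T_0 - t)) → 1 and there exists a positive constant E such that A(t) sqrt(T_0 - t)/E → 1 and B(t) sqrt(T_0 - t)/E → 1. -/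
open Set Metric Filter Topology

/-! ### Bounded vector fields are complete -/

/-- A bounded `C¹` vector field on a finite-dimensional space is complete: on `[-b, b]` the
Picard–Lindelöf theorem applies directly in the closed ball of radius `L * b`, which no integral
curve can leave. -/
theorem exists_global_integral_curve {E : Type*} [NormedAddCommGroup E] [NormedSpace ℝ E]
    [FiniteDimensional ℝ E] {v : E → E} (hv : ContDiff ℝ 1 v) {L : ℝ} (hL : ∀ p, ‖v p‖ ≤ L)
    (p₀ : E) : ∃ α : ℝ → E, α 0 = p₀ ∧ ∀ s, HasDerivAt α (v (α s)) s := by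
  have hcomplete : CompleteSpace E := FiniteDimensional.complete ℝ E
  have hL0 : 0 ≤ L := (norm_nonneg _).trans (hL p₀)
  have key := (exists_isMIntegralCurve_iff_exists_isMIntegralCurveOn_Ioo (I := modelWithCornersSelf ℝ E)
    (v := v) (contMDiff_vectorSpace_iff_contDiff.2 hv) p₀).2 ?_
  · obtain ⟨α, h0, h⟩ := key
    refine ⟨α, h0, fun s => ?_⟩
    have hs : HasFDerivAt α ((1 : ℝ →L[ℝ] ℝ).smulRight (v (α s))) s := (h s).hasFDerivAt
    simpa using hs.hasDerivAt
  intro a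
  set b : ℝ := |a| + 1 with hb
  have hb0 : 0 < b := by positivity
  obtain ⟨K, hK⟩ := (hv.locallyLipschitz.locallyLipschitzOn
    (s := closedBall p₀ (L * b))).exists_lipschitzOnWith_of_compact (isCompact_closedBall _ _)
  have hPL : IsPicardLindelof (fun _ => v) (tmin := -b) (tmax := b)
      ⟨0, by constructor <;> linarith⟩ p₀ ⟨L * b, by positivity⟩ 0 ⟨L, hL0⟩ K := by
    refine IsPicardLindelof.of_time_independent (fun p _ => hL p) hK ?_
    simp only [sub_zero, zero_sub, neg_neg, max_self, NNReal.coe_zero]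
    exact le_rfl
  obtain ⟨α, h0, h⟩ := hPL.exists_eq_forall_mem_Icc_hasDerivWithinAt₀
  refine ⟨α, h0, fun s hs => ?_⟩
  have hs' : s ∈ Ioo (-b) b := by
    have := le_abs_self a
    exact ⟨by linarith [hs.1], by linarith [hs.2]⟩
  have := ((h s (Ioo_subset_Icc_self hs')).hasDerivAt (Icc_mem_nhds hs'.1 hs'.2)).hasFDerivAt.hasMFDerivAt
  exact this.hasMFDerivWithinAt

/-! ### The reduced flow -/

/-- `F₁ / B²` as a function of `x = A / B` and `z = C / B`. -/
def redF1 (x z : ℝ) : ℝ := (1 - z) ^ 2 - 3 * x ^ 2 - 2 * x * (1 + z)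
/-- `F₂ / B²` as a function of `x = A / B` and `z = C / B`. -/
def redF2 (x z : ℝ) : ℝ := x ^ 2 - 2 * x * (1 - z) - (1 - z) * (z + 3)
/-- `F₃ / B²` as a function of `x = A / B` and `z = C / B`. -/
def redF3 (x z : ℝ) : ℝ := x ^ 2 + 2 * x * (1 - z) + (1 - z) * (1 + 3 * z)

/-- The cross curvature flow written in the variables `x = A / B`, `z = C / B`, `C`, in the
region `C < B`, with respect to the new time `s` given by `dt = (ABC)² / (A + B)⁴ ds`. -/
structure IsReducedFlow (x z C : ℝ → ℝ) : Prop where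
  x_pos : ∀ s, 0 < x s
  z_pos : ∀ s, 0 < z s
  z_lt_one : ∀ s, z s < 1
  C_pos : ∀ s, 0 < C s
  deriv_x : ∀ s, HasDerivAt x
    (-8 * x s * redF3 (x s) (z s) * (x s - 1 + z s) / (1 + x s) ^ 3) s
  deriv_z : ∀ s, HasDerivAt z
    (8 * z s * (1 - z s) * redF1 (x s) (z s) * (1 + x s + z s) / (1 + x s) ^ 4) s
  deriv_C : ∀ s, HasDerivAt C
    (-2 * C s * redF1 (x s) (z s) * redF2 (x s) (z s) / (1 + x s) ^ 4) s

theorem abs_redF1_le {x z : ℝ} (hx : 0 ≤ x) (hz : 0 ≤ z) (hz1 : z ≤ 1) :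
    |redF1 x z| ≤ 4 * (1 + x) ^ 2 := by
  rw [abs_le, redF1]; constructor <;> nlinarith [mul_nonneg hx hz, mul_nonneg hz (sub_nonneg.2 hz1),
    mul_nonneg hx (sub_nonneg.2 hz1), sq_nonneg x]

theorem abs_redF2_le {x z : ℝ} (hx : 0 ≤ x) (hz : 0 ≤ z) (hz1 : z ≤ 1) :
    |redF2 x z| ≤ 4 * (1 + x) ^ 2 := by
  rw [abs_le, redF2]; constructor <;> nlinarith [mul_nonneg hx hz, mul_nonneg hz (sub_nonneg.2 hz1),
    mul_nonneg hx (sub_nonneg.2 hz1), sq_nonneg x]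

theorem sq_le_redF3 {x z : ℝ} (hx : 0 ≤ x) (hz : 0 ≤ z) (hz1 : z ≤ 1) :
    x ^ 2 ≤ redF3 x z := by
  rw [redF3]; nlinarith [mul_nonneg hx hz, mul_nonneg hz (sub_nonneg.2 hz1),
    mul_nonneg hx (sub_nonneg.2 hz1), sq_nonneg x]

theorem redF3_le {x z : ℝ} (hx : 0 ≤ x) (hz : 0 ≤ z) (hz1 : z ≤ 1) :
    redF3 x z ≤ 2 * (1 + x) ^ 2 := by
  rw [redF3]; nlinarith [mul_nonneg hx hz, mul_nonneg hz (sub_nonneg.2 hz1),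
    mul_nonneg hx (sub_nonneg.2 hz1), sq_nonneg x]

/-- The vector field of the reduced flow in the coordinates `(log x, logit z, log C)`. -/
noncomputable def redField (p : ℝ × ℝ × ℝ) : ℝ × ℝ × ℝ :=
  let x := Real.exp p.1
  let z := Real.sigmoid p.2.1
  (-8 * redF3 x z * (x - 1 + z) / (1 + x) ^ 3,
    8 * redF1 x z * (1 + x + z) / (1 + x) ^ 4,
    -2 * redF1 x z * redF2 x z / (1 + x) ^ 4)

theorem contDiff_redField : ContDiff ℝ 1 redField := by
  have hx : ContDiff ℝ 1 fun p : ℝ × ℝ × ℝ => Real.exp p.1 := contDiff_fst.exp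
  have hz : ContDiff ℝ 1 fun p : ℝ × ℝ × ℝ => Real.sigmoid p.2.1 :=
    (contDiff_sigmoid.of_le le_top).comp (contDiff_fst.comp contDiff_snd)
  have hne : ∀ (n : ℕ) (p : ℝ × ℝ × ℝ), (1 + Real.exp p.1) ^ n ≠ 0 := fun n p =>
    (pow_pos (by positivity) n).ne'
  unfold redField redF1 redF2 redF3
  refine ContDiff.prodMk (ContDiff.div (by fun_prop) (by fun_prop) (hne 3))
    (ContDiff.prodMk (ContDiff.div (by fun_prop) (by fun_prop) (hne 4))
      (ContDiff.div (by fun_prop) (by fun_prop) (hne 4)))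

theorem norm_redField_le (p : ℝ × ℝ × ℝ) : ‖redField p‖ ≤ 64 := by
  have hx := Real.exp_pos p.1
  have hz := Real.sigmoid_pos p.2.1
  have hz1 := Real.sigmoid_lt_one p.2.1
  unfold redField
  set x := Real.exp p.1
  set z := Real.sigmoid p.2.1
  have h1 := abs_redF1_le hx.le hz.le hz1.le
  have h2 := abs_redF2_le hx.le hz.le hz1.le
  have h3 : |redF3 x z| ≤ 2 * (1 + x) ^ 2 := by
    rw [abs_of_nonneg ((sq_nonneg x).trans (sq_le_redF3 hx.le hz.le hz1.le))]
    exact redF3_le hx.le hz.le hz1.le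
  have hu : |x - 1 + z| ≤ 1 + x := abs_le.2 ⟨by linarith, by linarith⟩
  have hv : |1 + x + z| ≤ 2 * (1 + x) := abs_le.2 ⟨by linarith, by linarith⟩
  have hp : 0 < 1 + x := by positivity
  simp only [Prod.norm_def, Real.norm_eq_abs, abs_div, abs_mul, abs_neg, abs_pow, abs_of_pos hp,
    Nat.abs_ofNat]
  refine max_le ?_ (max_le ?_ ?_) <;> rw [div_le_iff₀ (by positivity)]
  · calc 8 * |redF3 x z| * |x - 1 + z| ≤ 8 * (2 * (1 + x) ^ 2) * (1 + x) := by gcongr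
      _ ≤ 64 * (1 + x) ^ 3 := by nlinarith [pow_pos hp 3]
  · have hp3 : (1 + x) ^ 3 ≤ (1 + x) ^ 4 := pow_le_pow_right₀ (by linarith) (by norm_num)
    calc 8 * |redF1 x z| * |1 + x + z| ≤ 8 * (4 * (1 + x) ^ 2) * (2 * (1 + x)) := by gcongr
      _ = 64 * (1 + x) ^ 3 := by ring
      _ ≤ 64 * (1 + x) ^ 4 := by linarith
  · calc 2 * |redF1 x z| * |redF2 x z| ≤ 2 * (4 * (1 + x) ^ 2) * (4 * (1 + x) ^ 2) := by gcongr
      _ ≤ 64 * (1 + x) ^ 4 := by nlinarith [pow_pos hp 4]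

/-- The reduced flow exists for all `s ∈ ℝ`, because `redField` is smooth and bounded. -/
theorem exists_isReducedFlow {x₀ z₀ C₀ : ℝ} (hx₀ : 0 < x₀) (hz₀ : 0 < z₀) (hz₁ : z₀ < 1)
    (hC₀ : 0 < C₀) :
    ∃ x z C : ℝ → ℝ, x 0 = x₀ ∧ z 0 = z₀ ∧ C 0 = C₀ ∧ IsReducedFlow x z C := by
  obtain ⟨ζ₀, hζ₀⟩ : z₀ ∈ range Real.sigmoid := by
    rw [Real.range_sigmoid]; exact ⟨hz₀, hz₁⟩
  obtain ⟨α, h0, h⟩ := exists_global_integral_curve contDiff_redField norm_redField_le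
    (Real.log x₀, ζ₀, Real.log C₀)
  have hsnd : ∀ s, HasDerivAt (fun s => (α s).2) (redField (α s)).2 s := fun s => by
    have := (ContinuousLinearMap.snd ℝ ℝ (ℝ × ℝ)).hasFDerivAt.comp_hasDerivAt s (h s)
    exact this
  have h1 : ∀ s, HasDerivAt (fun s => (α s).1) (redField (α s)).1 s := fun s => by
    have := (ContinuousLinearMap.fst ℝ ℝ (ℝ × ℝ)).hasFDerivAt.comp_hasDerivAt s (h s)
    exact this
  have h2 : ∀ s, HasDerivAt (fun s => (α s).2.1) (redField (α s)).2.1 s := fun s => by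
    have := (ContinuousLinearMap.fst ℝ ℝ ℝ).hasFDerivAt.comp_hasDerivAt s (hsnd s)
    exact this
  have h3 : ∀ s, HasDerivAt (fun s => (α s).2.2) (redField (α s)).2.2 s := fun s => by
    have := (ContinuousLinearMap.snd ℝ ℝ ℝ).hasFDerivAt.comp_hasDerivAt s (hsnd s)
    exact this
  refine ⟨fun s => Real.exp (α s).1, fun s => Real.sigmoid (α s).2.1, fun s => Real.exp (α s).2.2,
    by simp [h0, Real.exp_log hx₀], by simp [h0, hζ₀], by simp [h0, Real.exp_log hC₀],
    fun s => Real.exp_pos _, fun s => Real.sigmoid_pos _, fun s => Real.sigmoid_lt_one _,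
    fun s => Real.exp_pos _, fun s => ?_, fun s => ?_, fun s => ?_⟩
  · refine (h1 s).exp.congr_deriv ?_
    simp only [redField]; ring
  · refine ((Real.hasDerivAt_sigmoid _).comp s (h2 s)).congr_deriv ?_
    simp only [redField]; ring
  · refine (h3 s).exp.congr_deriv ?_
    simp only [redField]; ring

/-! ### Scalar differential inequalities -/

/-- If `f` cannot increase while it is above the level `M`, and starts below `M`, then it stays
below `M`. -/
theorem le_of_barrier {f f' : ℝ → ℝ} {M : ℝ} (hf : ∀ s, HasDerivAt f (f' s) s) (h0 : f 0 ≤ M)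
    (h : ∀ s, 0 ≤ s → M < f s → f' s ≤ 0) {s : ℝ} (hs : 0 ≤ s) : f s ≤ M := by
  have key : ∀ ε : ℝ, 0 < ε → f s ≤ M + ε * (s + 1) := by
    intro ε hε
    refine image_le_of_deriv_right_lt_deriv_boundary' (a := 0) (b := s) (f := f) (f' := f')
      (B := fun r => M + ε * (r + 1)) (B' := fun _ => ε)
      (fun r _ => (hf r).continuousAt.continuousWithinAt) (fun r _ => (hf r).hasDerivWithinAt)
      (by linarith) (by fun_prop) (fun r _ => ?_) (fun r hr he => ?_) ⟨hs, le_rfl⟩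
    · have : HasDerivAt (fun r : ℝ => M + ε * (r + 1)) (ε * 1) r :=
        (((hasDerivAt_id r).add_const 1).const_mul ε).const_add M
      simpa using this.hasDerivWithinAt
    · have hpos : 0 < ε * (r + 1) := mul_pos hε (by linarith [hr.1])
      exact (h r hr.1 (by linarith)).trans_lt hε
  refine le_of_forall_pos_le_add fun δ hδ => ?_
  have := key (δ / (s + 1)) (by positivity)
  rwa [div_mul_cancel₀ _ (by positivity)] at this

theorem exists_tendsto_of_deriv_exp_decay {f f' : ℝ → ℝ} {K μ : ℝ} (hμ : 0 < μ)
    (hf : ∀ s, HasDerivAt f (f' s) s) (hb : ∀ s, 0 ≤ s → |f' s| ≤ K * Real.exp (-μ * s)) :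
    ∃ l, Tendsto f atTop (𝓝 l) := by
  refine ⟨_, MeasureTheory.tendsto_limUnder_of_hasDerivAt_of_integrableOn_Ioi (a := 0)
    (fun s _ => hf s) ?_⟩
  have hd : f' = deriv f := funext fun s => (hf s).deriv.symm
  refine MeasureTheory.Integrable.mono' ((exp_neg_integrableOn_Ioi 0 hμ).const_mul K)
    (hd ▸ (measurable_deriv f).aestronglyMeasurable) ?_
  filter_upwards [MeasureTheory.self_mem_ae_restrict measurableSet_Ioi] with s hs
  exact hb s (le_of_lt hs)

/-! ### Lyapunov function and convergence of the reduced flow -/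

/-- The polynomial inequality making `log (z / (1 - z)) + 1 / x` a strict Lyapunov function: the
left-hand side is its derivative up to a positive factor. -/
theorem lyapunov_ineq {x z : ℝ} (hx : 0 < x) (hz : 0 ≤ z) (hz1 : z ≤ 1) :
    x * redF1 x z * (1 + x + z) + redF3 x z * (x - 1 + z) * (1 + x)
      ≤ -(1 / 4) * (x + (1 - z)) ^ 4 := by
  obtain ⟨d, rfl⟩ : ∃ d, z = 1 - d := ⟨1 - z, by ring⟩
  have hd : 0 ≤ d := by linarith
  have hdx := mul_nonneg hd hx.le
  have hid : x * redF1 x (1 - d) * (1 + x + (1 - d)) + redF3 x (1 - d) * (x - 1 + (1 - d)) * (1 + x)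
      = -(1 / 4) * (x + d) ^ 4
        - (x + d) ^ 2 * ((7 * x ^ 2 - 6 * x * d + 3 * d ^ 2) / 4)
        - (9 * x ^ 3 + 3 * x ^ 2 * d - x * d ^ 2 + 5 * d ^ 3) * (1 - d)
        - (8 * x ^ 2 - 4 * x * d + 4 * d ^ 2) * (1 - d) ^ 2 := by
    simp only [redF1, redF3]; ring
  have e1 : 0 ≤ (x + d) ^ 2 * ((7 * x ^ 2 - 6 * x * d + 3 * d ^ 2) / 4) :=
    mul_nonneg (sq_nonneg _) (by nlinarith [sq_nonneg (x - d), sq_nonneg x, sq_nonneg d])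
  have e2 : 0 ≤ (9 * x ^ 3 + 3 * x ^ 2 * d - x * d ^ 2 + 5 * d ^ 3) * (1 - d) := by
    refine mul_nonneg ?_ hz
    nlinarith [mul_nonneg hx.le (sq_nonneg (x - d)), mul_nonneg hd (sq_nonneg (x - d)),
      pow_pos hx 3, pow_nonneg hd 3, mul_nonneg hdx hx.le, mul_nonneg hdx hd]
  have e3 : 0 ≤ (8 * x ^ 2 - 4 * x * d + 4 * d ^ 2) * (1 - d) ^ 2 :=
    mul_nonneg (by nlinarith [sq_nonneg (x - d), sq_nonneg x, sq_nonneg d]) (sq_nonneg _)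
  rw [hid]
  have : x + (1 - (1 - d)) = x + d := by ring
  rw [this]
  linarith

namespace IsReducedFlow
variable {x z C : ℝ → ℝ}

/-- `x` decreases whenever it exceeds `1`, since `x - 1 + z` is then positive. -/
theorem x_le (h : IsReducedFlow x z C) {s : ℝ} (hs : 0 ≤ s) : x s ≤ max (x 0) 1 := by
  refine le_of_barrier h.deriv_x (le_max_left _ _) (fun r _ hr => ?_) hs
  have h1 : 1 < x r := (le_max_right _ _).trans_lt hr
  have hz := h.z_pos r
  have h3 := (sq_nonneg _).trans (sq_le_redF3 (h.x_pos r).le hz.le (h.z_lt_one r).le)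
  have : 0 ≤ x r * redF3 (x r) (z r) * (x r - 1 + z r) :=
    mul_nonneg (mul_nonneg (h.x_pos r).le h3) (by linarith)
  exact div_nonpos_of_nonpos_of_nonneg (by linarith) (pow_nonneg (by linarith) 3)

theorem hasDerivAt_lyapunov (h : IsReducedFlow x z C) (s : ℝ) :
    HasDerivAt (fun s => Real.log (z s) - Real.log (1 - z s) + (x s)⁻¹)
      (8 * (x s * redF1 (x s) (z s) * (1 + x s + z s)
        + redF3 (x s) (z s) * (x s - 1 + z s) * (1 + x s)) / (x s * (1 + x s) ^ 4)) s := by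
  have hx := h.x_pos s
  have hz := h.z_pos s
  have hz1 : 0 < 1 - z s := sub_pos.2 (h.z_lt_one s)
  have hp : 0 < 1 + x s := by linarith
  refine ((((h.deriv_z s).log hz.ne').sub (((h.deriv_z s).const_sub 1).log hz1.ne')).add
    ((h.deriv_x s).inv hx.ne')).congr_deriv ?_
  field_simp
  ring

theorem lyapunov_le (h : IsReducedFlow x z C) {s : ℝ} (hs : 0 ≤ s) :
    Real.log (z s) - Real.log (1 - z s) + (x s)⁻¹
      ≤ Real.log (z 0) - Real.log (1 - z 0) + (x 0)⁻¹ := by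
  refine le_of_barrier h.hasDerivAt_lyapunov le_rfl (fun r _ _ => ?_) hs
  have hx := h.x_pos r
  have := lyapunov_ineq hx (h.z_pos r).le (h.z_lt_one r).le
  have h4 : 0 ≤ (x r + (1 - z r)) ^ 4 := by positivity
  exact div_nonpos_of_nonpos_of_nonneg (by linarith) (by positivity)

/-- The Lyapunov function bounds the logit of `z` from above, so `z` stays away from `1`. -/
theorem exists_one_sub_z_ge (h : IsReducedFlow x z C) :
    ∃ d, 0 < d ∧ d ≤ 1 ∧ ∀ s, 0 ≤ s → d ≤ 1 - z s := by
  set w := Real.log (z 0) - Real.log (1 - z 0) + (x 0)⁻¹ with hw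
  refine ⟨(1 + Real.exp w)⁻¹, by positivity, inv_le_one_of_one_le₀ (by
    linarith [Real.exp_pos w]), fun s hs => ?_⟩
  have hz := h.z_pos s
  have hz1 : 0 < 1 - z s := sub_pos.2 (h.z_lt_one s)
  have h1 := h.lyapunov_le hs
  have h2 : Real.log (z s / (1 - z s)) ≤ w := by
    rw [Real.log_div hz.ne' hz1.ne']
    linarith [inv_pos.2 (h.x_pos s)]
  rw [Real.log_le_iff_le_exp (by positivity), div_le_iff₀ hz1] at h2
  rw [inv_le_iff_one_le_mul₀ (by positivity)]
  linarith

theorem exists_le_x (h : IsReducedFlow x z C) : ∃ m, 0 < m ∧ ∀ s, 0 ≤ s → m ≤ x s := by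
  obtain ⟨d, hd, -, hdz⟩ := h.exists_one_sub_z_ge
  refine ⟨min (x 0) d, lt_min (h.x_pos 0) hd, fun s hs => ?_⟩
  refine neg_le_neg_iff.1 (le_of_barrier (fun r => (h.deriv_x r).neg)
    (neg_le_neg (min_le_left _ _)) (fun r hr0 hr => ?_) hs)
  have hx := h.x_pos r
  have h1 : x r < d := (neg_lt_neg_iff.1 hr).trans_le (min_le_right _ _)
  have h2 := hdz r hr0
  have h3 := (sq_nonneg _).trans (sq_le_redF3 hx.le (h.z_pos r).le (h.z_lt_one r).le)
  have : x r * redF3 (x r) (z r) * (x r - 1 + z r) ≤ 0 :=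
    mul_nonpos_of_nonneg_of_nonpos (mul_nonneg hx.le h3) (by linarith)
  rw [Left.neg_nonpos_iff]
  exact div_nonneg (by linarith) (by positivity)

/-- With `z` away from `1` and `x` bounded, the Lyapunov function decreases at a definite linear
rate, which forces exponential decay of `z`. -/
theorem exists_z_le (h : IsReducedFlow x z C) :
    ∃ K c, 0 < K ∧ 0 < c ∧ ∀ s, 0 ≤ s → z s ≤ K * Real.exp (-c * s) := by
  obtain ⟨d, hd, hd1, hdz⟩ := h.exists_one_sub_z_ge
  set X := max (x 0) 1 with hX
  have hX0 : 0 < X := lt_max_of_lt_right one_pos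
  set w := Real.log (z 0) - Real.log (1 - z 0) + (x 0)⁻¹ with hw
  set c := 2 * d ^ 4 / X with hc
  refine ⟨Real.exp w, c, Real.exp_pos _, by positivity, fun s hs => ?_⟩
  have key := le_of_barrier (M := w)
    (fun r => (h.hasDerivAt_lyapunov r).add ((hasDerivAt_id r).const_mul c))
    (by simp [hw]) (fun r hr _ => ?_) hs
  · have hz := h.z_pos s
    have hl : Real.log (1 - z s) ≤ 0 :=
      Real.log_nonpos (by linarith [h.z_lt_one s]) (by linarith)
    have hi := inv_pos.2 (h.x_pos s)
    simp only [Pi.add_apply, id] at key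
    rw [← Real.exp_add, ← Real.log_le_iff_le_exp hz]
    linarith
  · have hx := h.x_pos r
    have hxX := h.x_le hr
    have hi := lyapunov_ineq hx (h.z_pos r).le (h.z_lt_one r).le
    have h1 : d * (1 + x r) ≤ x r + (1 - z r) := by nlinarith [hdz r hr]
    have h2 : (d * (1 + x r)) ^ 4 ≤ (x r + (1 - z r)) ^ 4 := by gcongr
    have h3 : c * x r ≤ 2 * d ^ 4 := by
      rw [hc, div_mul_eq_mul_div, div_le_iff₀ hX0]; gcongr
    have h4 : c * (x r * (1 + x r) ^ 4) ≤ 2 * d ^ 4 * (1 + x r) ^ 4 := by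
      rw [← mul_assoc]; gcongr
    rw [mul_one, div_add' _ _ _ (by positivity)]
    refine div_nonpos_of_nonpos_of_nonneg ?_ (by positivity)
    rw [mul_pow] at h2
    linarith

/-- Exponential convergence `(x, z) → (1, 0)`: the equation for `x - 1` is a linear contraction
perturbed by the exponentially small `z`. -/
theorem exists_decay (h : IsReducedFlow x z C) :
    ∃ K μ, 0 < μ ∧ ∀ s, 0 ≤ s → |x s - 1| + z s ≤ K * Real.exp (-μ * s) := by
  obtain ⟨K, c, hK, hc, hz⟩ := h.exists_z_le
  obtain ⟨m, hm, hmx⟩ := h.exists_le_x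
  set X := max (x 0) 1 with hX
  have hX0 : 0 < X := lt_max_of_lt_right one_pos
  set k := 8 * m ^ 3 / (1 + X) ^ 3 with hk
  have hk0 : 0 < k := by positivity
  set ν := min k c with hν
  have hν0 : 0 < ν := lt_min hk0 hc
  set M := (x 0 - 1) ^ 2 + 16 * K ^ 2 / c with hM
  have key : ∀ s, 0 ≤ s → (x s - 1) ^ 2 * Real.exp (ν * s) ≤ M := by
    intro s hs
    have hder : ∀ r, HasDerivAt (fun r => (x r - 1) ^ 2 * Real.exp (ν * r)
        + 16 * K ^ 2 / c * Real.exp (-c * r))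
        (2 * (x r - 1) * (-8 * x r * redF3 (x r) (z r) * (x r - 1 + z r) / (1 + x r) ^ 3)
          * Real.exp (ν * r) + (x r - 1) ^ 2 * (ν * Real.exp (ν * r))
          - 16 * K ^ 2 * Real.exp (-c * r)) r := by
      intro r
      have e1 : HasDerivAt (fun r => Real.exp (ν * r)) (Real.exp (ν * r) * (ν * 1)) r :=
        ((hasDerivAt_id r).const_mul ν).exp
      have e2 : HasDerivAt (fun r => Real.exp (-c * r)) (Real.exp (-c * r) * (-c * 1)) r :=
        ((hasDerivAt_id r).const_mul (-c)).exp
      refine (((((h.deriv_x r).sub_const 1).pow 2).mul e1).add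
        (e2.const_mul (16 * K ^ 2 / c))).congr_deriv ?_
      simp only [Pi.pow_apply]
      field_simp
      push_cast
      ring
    have := le_of_barrier (M := M) hder (by simp [hM]) (fun r hr _ => ?_) hs
    · have hpos : 0 ≤ 16 * K ^ 2 / c * Real.exp (-c * s) := by positivity
      linarith
    · have hx := h.x_pos r
      have hzr := h.z_pos r
      have hp : 0 < 1 + x r := by linarith
      have hxX := h.x_le hr
      -- the contraction rate lies between `k` and `16`
      set q := 8 * x r * redF3 (x r) (z r) / (1 + x r) ^ 3 with hq
      have hq1 : k ≤ q := by
        rw [hk, hq]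
        have := sq_le_redF3 hx.le hzr.le (h.z_lt_one r).le
        have hmr := hmx r hr
        have hnum : 8 * m ^ 3 ≤ 8 * x r * redF3 (x r) (z r) :=
          calc 8 * m ^ 3 ≤ 8 * x r ^ 3 := by gcongr
            _ = 8 * x r * x r ^ 2 := by ring
            _ ≤ 8 * x r * redF3 (x r) (z r) := by gcongr
        exact div_le_div₀ ((by positivity : (0 : ℝ) ≤ 8 * m ^ 3).trans hnum) hnum (by positivity) (by gcongr)
      have hq2 : q ≤ 16 := by
        rw [hq, div_le_iff₀ (by positivity)]
        have := redF3_le hx.le hzr.le (h.z_lt_one r).le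
        calc 8 * x r * redF3 (x r) (z r) ≤ 8 * (1 + x r) * (2 * (1 + x r) ^ 2) := by
              gcongr
              · exact (sq_nonneg _).trans (sq_le_redF3 hx.le hzr.le (h.z_lt_one r).le)
              · linarith
          _ = 16 * (1 + x r) ^ 3 := by ring
      have hE := Real.exp_pos (ν * r)
      have hrw : 2 * (x r - 1) * (-8 * x r * redF3 (x r) (z r) * (x r - 1 + z r) / (1 + x r) ^ 3)
          = -2 * q * (x r - 1) * (x r - 1 + z r) := by rw [hq]; ring
      rw [hrw]
      have hνk : ν ≤ k := min_le_left _ _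
      have hνc : ν ≤ c := min_le_right _ _
      have h1 : -2 * q * (x r - 1) * (x r - 1 + z r) + (x r - 1) ^ 2 * ν ≤ 16 * z r ^ 2 := by
        have a1 : 0 ≤ q * ((x r - 1) + z r) ^ 2 := mul_nonneg (hk0.le.trans hq1) (sq_nonneg _)
        have a2 : 0 ≤ (q - ν) * (x r - 1) ^ 2 := mul_nonneg (by linarith) (sq_nonneg _)
        have a3 : 0 ≤ (16 - q) * z r ^ 2 := mul_nonneg (by linarith) (sq_nonneg _)
        linarith
      have h2 : z r ^ 2 ≤ K ^ 2 * Real.exp (-c * r) ^ 2 := by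
        rw [← mul_pow]; have := hz r hr; gcongr
      have h3 : Real.exp (-c * r) ^ 2 * Real.exp (ν * r) ≤ Real.exp (-c * r) := by
        rw [← Real.exp_nat_mul, ← Real.exp_add]
        apply Real.exp_le_exp.2
        have := mul_le_mul_of_nonneg_right hνc hr
        push_cast
        linarith
      have h4 : (-2 * q * (x r - 1) * (x r - 1 + z r) + (x r - 1) ^ 2 * ν) * Real.exp (ν * r)
          ≤ 16 * (K ^ 2 * Real.exp (-c * r) ^ 2) * Real.exp (ν * r) := by
        gcongr; linarith
      have h5 := mul_le_mul_of_nonneg_left h3 (by positivity : 0 ≤ 16 * K ^ 2)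
      linarith
  have hM0 : 0 ≤ M := by positivity
  refine ⟨√M + K, ν / 2, by positivity, fun s hs => ?_⟩
  have hE : Real.exp (-(ν / 2) * s) ^ 2 * Real.exp (ν * s) = 1 := by
    rw [← Real.exp_nat_mul, ← Real.exp_add, ← Real.exp_zero]
    congr 1; push_cast; ring
  have h1 : |x s - 1| ≤ √M * Real.exp (-(ν / 2) * s) := by
    apply abs_le_of_sq_le_sq _ (by positivity)
    rw [mul_pow, Real.sq_sqrt hM0]
    have := mul_le_mul_of_nonneg_right (key s hs) (sq_nonneg (Real.exp (-(ν / 2) * s)))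
    nlinarith
  have h2 : z s ≤ K * Real.exp (-(ν / 2) * s) := by
    refine (hz s hs).trans ?_
    have : ν ≤ c := min_le_right _ _
    gcongr
    nlinarith
  linarith

end IsReducedFlow

/-! ### Blow-up time and asymptotics -/

/-- The inverse `σ` of a time change `t` mapping `[0, ∞)` onto `[0, T)`. -/
theorem exists_inverse_time {t φ : ℝ → ℝ} {T : ℝ} (ht0 : t 0 = 0) (hφ : ∀ s, 0 < φ s)
    (ht : ∀ s, HasStrictDerivAt t (φ s) s) (hmono : StrictMono t)
    (hT : Tendsto t atTop (𝓝 T)) :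
    ∃ σ : ℝ → ℝ, (∀ s, σ (t s) = s) ∧ (∀ s, HasDerivAt σ (φ s)⁻¹ (t s)) ∧
      (∀ τ, 0 ≤ τ → τ < T → ∃ s, 0 ≤ s ∧ t s = τ) ∧ Tendsto σ (𝓝[<] T) atTop := by
  have hinv : ∀ s, Function.invFun t (t s) = s := Function.leftInverse_invFun hmono.injective
  have hsurj : ∀ τ, 0 ≤ τ → τ < T → ∃ s, 0 ≤ s ∧ t s = τ := by
    intro τ h0 h1
    obtain ⟨s₁, hs₁, hs₁0⟩ := ((hT.eventually_const_lt h1).and (eventually_ge_atTop 0)).exists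
    have hcont : ContinuousOn t (Icc 0 s₁) := fun s _ =>
      (ht s).hasDerivAt.continuousAt.continuousWithinAt
    obtain ⟨s, hs, rfl⟩ := intermediate_value_Icc hs₁0 hcont ⟨ht0.trans_le h0, hs₁.le⟩
    exact ⟨s, hs.1, rfl⟩
  have hlt : ∀ s, t s < T := fun s =>
    (hmono (lt_add_one s)).trans_le (hmono.monotone.ge_of_tendsto hT _)
  refine ⟨Function.invFun t, hinv, fun s => ?_, hsurj, ?_⟩
  · exact ((ht s).to_local_left_inverse (hφ s).ne' (Eventually.of_forall hinv)).hasDerivAt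
  · refine tendsto_atTop.2 fun M => ?_
    have h1 : ∀ᶠ τ in 𝓝[<] T, t (max M 0) < τ :=
      (eventually_gt_nhds (hlt _)).filter_mono nhdsWithin_le_nhds
    filter_upwards [h1, self_mem_nhdsWithin] with τ hτ hτT
    have h0 : t 0 ≤ t (max M 0) := hmono.monotone (le_max_right _ _)
    obtain ⟨s, -, rfl⟩ := hsurj τ (by linarith) hτT
    rw [hinv]
    exact (le_max_left _ _).trans (hmono.lt_iff_lt.1 hτ).le

namespace IsReducedFlow
variable {x z C : ℝ → ℝ}

theorem tendsto_x_z (h : IsReducedFlow x z C) :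
    Tendsto x atTop (𝓝 1) ∧ Tendsto z atTop (𝓝 0) := by
  obtain ⟨K, μ, hμ, hK⟩ := h.exists_decay
  have hlim : Tendsto (fun s => K * Real.exp (-μ * s)) atTop (𝓝 0) := by
    have h1 : Tendsto (fun s : ℝ => -μ * s) atTop atBot :=
      tendsto_id.const_mul_atTop_of_neg (by linarith)
    simpa using (Real.tendsto_exp_atBot.comp h1).const_mul K
  constructor
  · rw [tendsto_iff_norm_sub_tendsto_zero]
    refine squeeze_zero' (Eventually.of_forall fun _ => norm_nonneg _) ?_ hlim
    filter_upwards [eventually_ge_atTop 0] with s hs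
    have := hK s hs
    have := h.z_pos s
    rw [Real.norm_eq_abs]; linarith
  · refine squeeze_zero' (Eventually.of_forall fun s => (h.z_pos s).le) ?_ hlim
    filter_upwards [eventually_ge_atTop 0] with s hs
    linarith [hK s hs, abs_nonneg (x s - 1)]

theorem tendsto_redF (h : IsReducedFlow x z C) :
    Tendsto (fun s => redF1 (x s) (z s)) atTop (𝓝 (-4)) ∧
      Tendsto (fun s => redF2 (x s) (z s)) atTop (𝓝 (-4)) := by
  obtain ⟨hx, hz⟩ := h.tendsto_x_z
  have h1z := hz.const_sub 1
  constructor
  · have hl := ((h1z.pow 2).sub ((hx.pow 2).const_mul 3)).sub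
      ((hx.const_mul 2).mul (hz.const_add 1))
    norm_num at hl
    exact hl
  · have hl := ((hx.pow 2).sub ((hx.const_mul 2).mul h1z)).sub (h1z.mul (hz.add_const 3))
    norm_num at hl
    exact hl

/-- The product `A C = x C² / z` has a positive limit, because the derivative of its logarithm is
controlled by `|x - 1| + z`. -/
theorem exists_tendsto_AC (h : IsReducedFlow x z C) :
    ∃ L, 0 < L ∧ Tendsto (fun s => x s * C s ^ 2 / z s) atTop (𝓝 L) := by
  obtain ⟨K, μ, hμ, hK⟩ := h.exists_decay
  have hder : ∀ s, HasDerivAt (fun s => Real.log (x s) + 2 * Real.log (C s) - Real.log (z s))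
      (4 * redF2 (x s) (z s) * (x s - 1 + z s) * (1 + x s + z s) / (1 + x s) ^ 4) s := by
    intro s
    have hx := h.x_pos s
    have hz := h.z_pos s
    have hC := h.C_pos s
    have hp : 0 < 1 + x s := by linarith
    refine ((((h.deriv_x s).log hx.ne').add (((h.deriv_C s).log hC.ne').const_mul 2)).sub
      ((h.deriv_z s).log hz.ne')).congr_deriv ?_
    field_simp
    simp only [redF1, redF2, redF3]
    ring
  obtain ⟨l, hl⟩ := exists_tendsto_of_deriv_exp_decay (K := 32 * K) hμ hder (fun s hs => by
    have hx := h.x_pos s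
    have hz := h.z_pos s
    have hz1 := h.z_lt_one s
    have hp : 0 < 1 + x s := by linarith
    have h2 := abs_redF2_le hx.le hz.le hz1.le
    have hu : |x s - 1 + z s| ≤ |x s - 1| + z s :=
      (abs_add_le _ _).trans_eq (by rw [abs_of_pos hz])
    have hv : |1 + x s + z s| ≤ 2 * (1 + x s) := abs_le.2 ⟨by linarith, by linarith⟩
    have h0 : 0 ≤ |x s - 1| + z s := by positivity
    have hp3 : (1 + x s) ^ 3 ≤ (1 + x s) ^ 4 := pow_le_pow_right₀ (by linarith) (by norm_num)
    rw [abs_div, abs_mul, abs_mul, abs_mul, abs_pow, abs_of_pos hp, Nat.abs_ofNat,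
      div_le_iff₀ (by positivity)]
    calc 4 * |redF2 (x s) (z s)| * |x s - 1 + z s| * |1 + x s + z s|
        ≤ 4 * (4 * (1 + x s) ^ 2) * (|x s - 1| + z s) * (2 * (1 + x s)) := by gcongr
      _ = 32 * (|x s - 1| + z s) * (1 + x s) ^ 3 := by ring
      _ ≤ 32 * (|x s - 1| + z s) * (1 + x s) ^ 4 := by gcongr
      _ ≤ 32 * (K * Real.exp (-μ * s)) * (1 + x s) ^ 4 := by have := hK s hs; gcongr
      _ = 32 * K * Real.exp (-μ * s) * (1 + x s) ^ 4 := by ring)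
  refine ⟨Real.exp l, Real.exp_pos l, ((Real.continuous_exp.tendsto l).comp hl).congr fun s => ?_⟩
  have hx := h.x_pos s
  have hz := h.z_pos s
  have hC := h.C_pos s
  simp only [Function.comp_apply]
  rw [Real.exp_sub, Real.exp_add, Real.exp_log hx, Real.exp_log hz, two_mul, Real.exp_add,
    Real.exp_log hC]
  ring

/-- Eventually `(log C)' ≤ -1` (the actual limit of `(log C)'` is `-2`). -/
theorem exists_deriv_C_le (h : IsReducedFlow x z C) :
    ∃ s₁, ∀ s, s₁ ≤ s →
      (1 + x s) ^ 4 ≤ 2 * (redF1 (x s) (z s) * redF2 (x s) (z s)) := by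
  obtain ⟨hx, hz⟩ := h.tendsto_x_z
  obtain ⟨h1, h2⟩ := h.tendsto_redF
  have hl : Tendsto (fun s => 2 * (redF1 (x s) (z s) * redF2 (x s) (z s)) - (1 + x s) ^ 4) atTop
      (𝓝 (2 * (-4 * -4) - (1 + 1) ^ 4)) :=
    ((h1.mul h2).const_mul 2).sub ((hx.const_add 1).pow 4)
  obtain ⟨s₁, hs₁⟩ := eventually_atTop.1
    (hl.eventually_const_lt (by norm_num : (0 : ℝ) < 2 * (-4 * -4) - (1 + 1) ^ 4))
  exact ⟨s₁, fun s hs => by linarith [hs₁ s hs]⟩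

theorem tendsto_C (h : IsReducedFlow x z C) : Tendsto C atTop (𝓝 0) := by
  obtain ⟨s₁, hs₁⟩ := h.exists_deriv_C_le
  have hder : ∀ s, HasDerivAt (fun s => Real.log (C s) + s)
      (-2 * C s * redF1 (x s) (z s) * redF2 (x s) (z s) / (1 + x s) ^ 4 / C s + 1) s := fun s =>
    ((h.deriv_C s).log (h.C_pos s).ne').add (hasDerivAt_id s)
  have hanti : AntitoneOn (fun s => Real.log (C s) + s) (Ici s₁) := by
    refine antitoneOn_of_hasDerivWithinAt_nonpos (convex_Ici _)
      (fun s _ => (hder s).continuousAt.continuousWithinAt)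
      (fun s _ => (hder s).hasDerivWithinAt) (fun s hs => ?_)
    have hx := h.x_pos s
    have hC := h.C_pos s
    have := hs₁ s (interior_subset hs)
    rw [div_div, div_add_one (by positivity)]
    refine div_nonpos_of_nonpos_of_nonneg ?_ (by positivity)
    nlinarith
  set k := Real.log (C s₁) + s₁ with hk
  refine squeeze_zero' (g := fun s => Real.exp (k - s)) (Eventually.of_forall fun s => (h.C_pos s).le) ?_
    (Real.tendsto_exp_atBot.comp ?_)
  · filter_upwards [eventually_ge_atTop s₁] with s hs
    have := hanti (mem_Ici.2 le_rfl) (mem_Ici.2 hs) hs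
    rw [← Real.log_le_iff_le_exp (h.C_pos s)]
    simp only at this
    linarith
  · exact tendsto_atBot_add_const_left _ k tendsto_neg_atTop_atBot

/-- The original time `t` as a function of `s`; it has a finite limit `T` as `s → ∞`. -/
theorem exists_time (h : IsReducedFlow x z C) :
    ∃ (T : ℝ) (t : ℝ → ℝ), t 0 = 0 ∧
      (∀ s, HasStrictDerivAt t (C s ^ 2 * x s ^ 2 / (1 + x s) ^ 4) s) ∧ StrictMono t ∧
      Tendsto t atTop (𝓝 T) := by
  have hxc : Continuous x := continuous_iff_continuousAt.2 fun s => (h.deriv_x s).continuousAt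
  have hCc : Continuous C := continuous_iff_continuousAt.2 fun s => (h.deriv_C s).continuousAt
  have hφc : Continuous fun s => C s ^ 2 * x s ^ 2 / (1 + x s) ^ 4 :=
    Continuous.div (by fun_prop) (by fun_prop) fun s => by have := h.x_pos s; positivity
  set t : ℝ → ℝ := fun s => ∫ r in (0 : ℝ)..s, C r ^ 2 * x r ^ 2 / (1 + x r) ^ 4 with ht
  have hder : ∀ s, HasStrictDerivAt t (C s ^ 2 * x s ^ 2 / (1 + x s) ^ 4) s := fun s =>
    hφc.integral_hasStrictDerivAt 0 s
  have hmono : StrictMono t := strictMono_of_hasDerivAt_pos (fun s => (hder s).hasDerivAt)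
    fun s => by have := h.x_pos s; have := h.C_pos s; positivity
  obtain ⟨s₁, hs₁⟩ := h.exists_deriv_C_le
  -- `t + C²` is eventually nonincreasing, which bounds `t`
  have hder2 : ∀ s, HasDerivAt (fun s => t s + C s ^ 2)
      (C s ^ 2 * x s ^ 2 / (1 + x s) ^ 4
        + 2 * C s * (-2 * C s * redF1 (x s) (z s) * redF2 (x s) (z s) / (1 + x s) ^ 4)) s :=
    fun s => ((hder s).hasDerivAt.add ((h.deriv_C s).pow 2)).congr_deriv (by push_cast; ring)
  have hanti : AntitoneOn (fun s => t s + C s ^ 2) (Ici s₁) := by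
    refine antitoneOn_of_hasDerivWithinAt_nonpos (convex_Ici _)
      (fun s _ => (hder2 s).continuousAt.continuousWithinAt)
      (fun s _ => (hder2 s).hasDerivWithinAt) (fun s hs => ?_)
    have hx := h.x_pos s
    have h1 := hs₁ s (interior_subset hs)
    have h2 : x s ^ 2 ≤ (1 + x s) ^ 4 := by
      calc x s ^ 2 ≤ (1 + x s) ^ 2 := by gcongr; linarith
        _ ≤ (1 + x s) ^ 4 := pow_le_pow_right₀ (by linarith) (by norm_num)
    have h3 : 0 ≤ C s ^ 2 *
        (4 * (redF1 (x s) (z s) * redF2 (x s) (z s)) - x s ^ 2) :=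
      mul_nonneg (sq_nonneg _) (by nlinarith [pow_pos (by linarith : 0 < 1 + x s) 4])
    rw [← mul_div_assoc, ← add_div]
    exact div_nonpos_of_nonpos_of_nonneg (by linarith) (by positivity)
  have hbdd : BddAbove (range t) := by
    refine ⟨t s₁ + C s₁ ^ 2, ?_⟩
    rintro _ ⟨s, rfl⟩
    have h1 := hanti (mem_Ici.2 le_rfl) (mem_Ici.2 (le_max_right s s₁)) (le_max_right s s₁)
    have h2 := hmono.monotone (le_max_left s s₁)
    simp only at h1
    linarith [sq_nonneg (C (max s s₁))]
  exact ⟨_, t, by simp [ht], hder, hmono, tendsto_atTop_ciSup hmono.monotone hbdd⟩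

/-- `C² ∼ 64 (T - t)`, by L'Hôpital's rule. -/
theorem tendsto_sq_div (h : IsReducedFlow x z C) {t : ℝ → ℝ} {T : ℝ}
    (ht : ∀ s, HasStrictDerivAt t (C s ^ 2 * x s ^ 2 / (1 + x s) ^ 4) s)
    (hT : Tendsto t atTop (𝓝 T)) :
    Tendsto (fun s => C s ^ 2 / (T - t s)) atTop (𝓝 64) := by
  obtain ⟨hx, hz⟩ := h.tendsto_x_z
  obtain ⟨h1, h2⟩ := h.tendsto_redF
  refine HasDerivAt.lhopital_zero_atTop
    (f' := fun s => 2 * C s * (-2 * C s * redF1 (x s) (z s) * redF2 (x s) (z s) / (1 + x s) ^ 4))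
    (g' := fun s => -(C s ^ 2 * x s ^ 2 / (1 + x s) ^ 4))
    (Eventually.of_forall fun s => ((h.deriv_C s).pow 2).congr_deriv (by push_cast; ring))
    (Eventually.of_forall fun s => (ht s).hasDerivAt.const_sub T)
    (Eventually.of_forall fun s => ?_) ?_ ?_ ?_
  · have := h.x_pos s
    have := h.C_pos s
    exact neg_ne_zero.2 (by positivity)
  · simpa using h.tendsto_C.pow 2
  · simpa using hT.const_sub T
  · have hl : Tendsto (fun s => 4 * (redF1 (x s) (z s) * redF2 (x s) (z s)) / x s ^ 2) atTop
        (𝓝 (4 * (-4 * -4) / 1 ^ 2)) :=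
      ((h1.mul h2).const_mul 4).div (hx.pow 2) (by norm_num)
    have he : (4 * (-4 * -4) / 1 ^ 2 : ℝ) = 64 := by norm_num
    rw [he] at hl
    refine hl.congr fun s => ?_
    have := h.x_pos s
    have := h.C_pos s
    have hp : 0 < 1 + x s := by linarith
    field_simp
    ring

theorem hasDerivAt_B (h : IsReducedFlow x z C) (s : ℝ) :
    HasDerivAt (fun s => C s / z s)
      (-2 * (C s / z s) * redF3 (x s) (z s) * redF1 (x s) (z s) / (1 + x s) ^ 4) s := by
  have hx := h.x_pos s
  have hz := h.z_pos s
  have hp : 0 < 1 + x s := by linarith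
  refine ((h.deriv_C s).div (h.deriv_z s) hz.ne').congr_deriv ?_
  field_simp
  simp only [redF1, redF2, redF3]
  ring

theorem hasDerivAt_A (h : IsReducedFlow x z C) (s : ℝ) :
    HasDerivAt (fun s => x s * (C s / z s))
      (-2 * (x s * (C s / z s)) * redF2 (x s) (z s) * redF3 (x s) (z s) / (1 + x s) ^ 4) s := by
  have hx := h.x_pos s
  have hz := h.z_pos s
  have hp : 0 < 1 + x s := by linarith
  refine ((h.deriv_x s).mul (h.hasDerivAt_B s)).congr_deriv ?_
  field_simp
  simp only [redF1, redF2, redF3]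
  ring

end IsReducedFlow

/-! ### Return to the original variables -/

/-- Undoing the time change turns a reduced flow into a solution of the original system, with
`A = x C / z` and `B = C / z`. -/
theorem isSolSL2_of_isReducedFlow {x z C t σ : ℝ → ℝ} {T : ℝ} (h : IsReducedFlow x z C)
    (hσt : ∀ s, σ (t s) = s)
    (hσ : ∀ s, HasDerivAt σ (C s ^ 2 * x s ^ 2 / (1 + x s) ^ 4)⁻¹ (t s))
    (hsurj : ∀ τ, 0 ≤ τ → τ < T → ∃ s, 0 ≤ s ∧ t s = τ) :
    IsSolSL2 (fun τ => x (σ τ) * (C (σ τ) / z (σ τ))) (fun τ => C (σ τ) / z (σ τ))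
      (fun τ => C (σ τ)) {τ : ℝ | 0 ≤ τ ∧ (τ : EReal) < (T : EReal)} := by
  rintro τ ⟨hτ0, hτT⟩
  obtain ⟨s, -, rfl⟩ := hsurj τ hτ0 (EReal.coe_lt_coe_iff.1 hτT)
  have hx := h.x_pos s
  have hz := h.z_pos s
  have hC := h.C_pos s
  have hp : 0 < 1 + x s := by linarith
  have hcomp : ∀ {f : ℝ → ℝ} {f' : ℝ}, HasDerivAt f f' s →
      HasDerivAt (fun τ => f (σ τ)) (f' * (C s ^ 2 * x s ^ 2 / (1 + x s) ^ 4)⁻¹) (t s) := by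
    intro f f' hf
    rw [← hσt s] at hf
    have := hf.comp (t s) (hσ s)
    exact this
  have e1 : sl2F1 (x s * (C s / z s)) (C s / z s) (C s) = (C s / z s) ^ 2 * redF1 (x s) (z s) := by
    simp only [sl2F1, redF1]; field_simp; ring
  have e2 : sl2F2 (x s * (C s / z s)) (C s / z s) (C s) = (C s / z s) ^ 2 * redF2 (x s) (z s) := by
    simp only [sl2F2, redF2]; field_simp; ring
  have e3 : sl2F3 (x s * (C s / z s)) (C s / z s) (C s) = (C s / z s) ^ 2 * redF3 (x s) (z s) := by
    simp only [sl2F3, redF3]; field_simp; ring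
  simp only [hσt, e1, e2, e3]
  refine ⟨⟨by positivity, by positivity, hC⟩, (hcomp (h.hasDerivAt_A s)).congr_deriv ?_,
    (hcomp (h.hasDerivAt_B s)).congr_deriv ?_, (hcomp (h.deriv_C s)).congr_deriv ?_⟩ <;>
  field_simp

/-- For any initial data `A0, B0, C0 > 0` with `B0 > C0`, the `SL(2,ℝ)` negative cross
curvature flow has a maximal positive solution on a finite interval `[0, T0)`, and as
`t → T0⁻` one has `C ∼ 8√(T0 - t)` and `A, B ∼ E/√(T0 - t)` for some constant
`E > 0`. -/
theorem sl2_generic_blowup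
    (A0 B0 C0 : ℝ) (hA0 : 0 < A0) (hB0 : 0 < B0) (hC0 : 0 < C0) (hB0C0 : B0 > C0) :
    ∃ (T0 : ℝ) (A B C : ℝ → ℝ), 0 < T0 ∧
      A 0 = A0 ∧ B 0 = B0 ∧ C 0 = C0 ∧
      IsMaxSolSL2 A B C (T0 : EReal) ∧
      Filter.Tendsto (fun t => C t / (8 * Real.sqrt (T0 - t)))
        (nhdsWithin T0 (Set.Iio T0)) (nhds 1) ∧
      ∃ E : ℝ, 0 < E ∧
        Filter.Tendsto (fun t => A t * Real.sqrt (T0 - t) / E)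
          (nhdsWithin T0 (Set.Iio T0)) (nhds 1) ∧
        Filter.Tendsto (fun t => B t * Real.sqrt (T0 - t) / E)
          (nhdsWithin T0 (Set.Iio T0)) (nhds 1) := by
  obtain ⟨x, z, C, hx0, hz0, hC0', h⟩ := exists_isReducedFlow (div_pos hA0 hB0) (div_pos hC0 hB0)
    ((div_lt_one hB0).2 hB0C0) hC0
  obtain ⟨T, t, ht0, ht, hmono, hT⟩ := h.exists_time
  obtain ⟨σ, hσt, hσ, hsurj, hσT⟩ := exists_inverse_time ht0
    (fun s => by have := h.x_pos s; have := h.C_pos s; positivity) ht hmono hT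
  obtain ⟨L, hL, hAC⟩ := h.exists_tendsto_AC
  have hT0 : 0 < T := by
    have h1 : t 0 < t 1 := hmono one_pos
    have h2 := hmono.monotone.ge_of_tendsto hT 1
    linarith
  have hσ0 : σ 0 = 0 := by simpa [ht0] using hσt 0
  have htσ : ∀ᶠ τ in 𝓝[<] T, t (σ τ) = τ ∧ τ < T := by
    filter_upwards [(eventually_gt_nhds hT0).filter_mono nhdsWithin_le_nhds,
      self_mem_nhdsWithin] with τ h0 h1
    obtain ⟨s, -, rfl⟩ := hsurj τ (le_of_lt h0) h1
    exact ⟨by rw [hσt], h1⟩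
  have hClim : Tendsto (fun τ => C (σ τ) / √(T - τ)) (𝓝[<] T) (𝓝 8) := by
    have h1 := (Real.continuous_sqrt.tendsto 64).comp ((h.tendsto_sq_div ht hT).comp hσT)
    rw [show √(64 : ℝ) = 8 by
      rw [show (64 : ℝ) = 8 ^ 2 by norm_num]; exact Real.sqrt_sq (by norm_num)] at h1
    refine h1.congr' ?_
    filter_upwards [htσ] with τ hτ
    simp only [Function.comp_apply]
    rw [hτ.1, Real.sqrt_div (sq_nonneg _), Real.sqrt_sq (h.C_pos _).le]
  have hAlim : Tendsto (fun τ => x (σ τ) * (C (σ τ) / z (σ τ)) * √(T - τ)) (𝓝[<] T)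
      (𝓝 (L / 8)) := by
    refine ((hAC.comp hσT).div hClim (by norm_num)).congr' ?_
    filter_upwards [htσ] with τ hτ
    have hC := h.C_pos (σ τ)
    have hz := h.z_pos (σ τ)
    have hr : 0 < √(T - τ) := Real.sqrt_pos.2 (by linarith [hτ.2])
    simp only [Function.comp_apply, Pi.div_apply]
    field_simp
  have hBlim : Tendsto (fun τ => C (σ τ) / z (σ τ) * √(T - τ)) (𝓝[<] T) (𝓝 (L / 8)) := by
    have h1 := hAlim.div (h.tendsto_x_z.1.comp hσT) one_ne_zero
    rw [div_one] at h1
    refine h1.congr fun τ => ?_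
    have hx := h.x_pos (σ τ)
    simp only [Function.comp_apply, Pi.div_apply]
    field_simp
  have hL8 : 0 < L / 8 := by positivity
  refine ⟨T, fun τ => x (σ τ) * (C (σ τ) / z (σ τ)), fun τ => C (σ τ) / z (σ τ),
    fun τ => C (σ τ), hT0, ?_, ?_, ?_, ⟨isSolSL2_of_isReducedFlow h hσt hσ hsurj, ?_⟩, ?_,
    L / 8, hL8, ?_, ?_⟩
  · simp only [hσ0, hx0, hz0, hC0']; field_simp
  · simp only [hσ0, hz0, hC0']; field_simp
  · simp only [hσ0, hC0']
  · intro A' B' C' T' hTT' hsol heq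
    -- an extension would have `C'` continuous and positive at `T`, but `C → 0` from the left
    obtain ⟨⟨-, -, hpos⟩, -, -, hder⟩ := hsol T ⟨hT0.le, hTT'⟩
    have h1 : Tendsto C' (𝓝[<] T) (𝓝 (C' T)) := hder.continuousAt.tendsto.mono_left nhdsWithin_le_nhds
    have h2 : Tendsto C' (𝓝[<] T) (𝓝 0) := by
      refine (h.tendsto_C.comp hσT).congr' ?_
      filter_upwards [(eventually_gt_nhds hT0).filter_mono nhdsWithin_le_nhds,
        self_mem_nhdsWithin] with τ h0 hτT
      exact (heq τ (le_of_lt h0) (EReal.coe_lt_coe_iff.2 hτT)).2.2.symm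
    exact hpos.ne' (tendsto_nhds_unique h1 h2)
  · have h1 := hClim.div_const 8
    rw [div_self (by norm_num)] at h1
    exact h1.congr fun τ => by rw [div_div, mul_comm]
  · simpa [div_self hL8.ne'] using hAlim.div_const (L / 8)
  · simpa [div_self hL8.ne'] using hBlim.div_const (L / 8)
end

section
/- For any initial data A_0 > B_0 > 0, C_0 > 0, the E(2) negative cross curvature flow ODE system has a positive solution on all of [0, ∞), which satisfies B_0 ≤ B(t) < A(t) ≤ A_0 for all t, C is increasing with lim_{t→∞} C(t) = ∞, the quantity (A - B)^2 C is increasing and converges to a finite positive limit as t → ∞, and there exist positive constants E_1, E_2 such that as t → ∞: t^{1/6}(A(t) - E_1) → E_2, t^{1/6}(B(t) - E_1) → -E_2, and C(t)/t^{1/3} → (8 E_2/E_1) sqrt(6). -/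
/-!
The system has two first integrals that make it explicitly solvable by a quadrature.
Put `r = (A - B) / (A + B) ∈ (0, 1)`. Along the flow
`d log (A + B) / dr = r / (2 (1 - r²))` and `d log C / dr = -(4 - r²) / (2 r (1 - r²))`, so
with `p = (1 + r)^(1/4)`, `q = (1 - r)^(1/4)` and constants `E, K > 0`,
`A = E p³ / q`, `B = E q³ / p`, `C = K (p q)³ / r²`
(`isSol_of_ratio`), and what remains is `r' = -64 r⁷ / (K² (p q)¹⁰)`.

For `w = r⁻⁶` this reads `w' = (384 / K²) (1 - w^(-1/3))^(-5/2)`, which is solved for all `t ≥ 0` by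
inverting `w ↦ t` (`exists_quadrature`). Since `w' → 384 / K²`, `w / t` has the same limit, and
`t^(1/6) r → ρ = (K² / 384)^(1/6)` (`exists_ratio`).

All claims are then read off: `A`, `B`, `C` are monotone in `r`, `(A - B)² C = 4 E² K p q`, and
`A = E + E r + o(r)`, `B = E - E r + o(r)`, `C ∼ K / r²` as `r → 0`. This gives `E1 = E`,
`E2 = ρ E`, and `K / ρ² = 8 ρ √6` because `384 = (8 √6)²`.
-/

/-- A triple of functions solves the `E(2)` negative cross curvature flow ODE system
(with positivity) on a set `s ⊆ ℝ`. -/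
def IsSolE2 (A B C : ℝ → ℝ) (s : Set ℝ) : Prop :=
  ∀ t ∈ s,
    (0 < A t ∧ 0 < B t ∧ 0 < C t) ∧
    HasDerivAt A
      (-2 * A t * (3 * B t + A t) * (A t - B t) ^ 3 / (A t * B t * C t) ^ 2) t ∧
    HasDerivAt B
      (-2 * B t * (3 * A t + B t) * (B t - A t) ^ 3 / (A t * B t * C t) ^ 2) t ∧
    HasDerivAt C
      (2 * C t * (3 * A t + B t) * (3 * B t + A t) * (A t - B t) ^ 2 /
        (A t * B t * C t) ^ 2) t

open Filter Topology

/-- Quadrature of a scalar autonomous equation: if `g ≥ δ > 0` is continuous, then `w' = 1 / g w`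
has a global increasing solution, the inverse function of `x ↦ ∫ z in w₀..x, g z`. -/
lemma exists_quadrature (g : ℝ → ℝ) (hg : Continuous g) (δ : ℝ) (hδ : 0 < δ)
    (hgδ : ∀ z, δ ≤ g z) (w₀ : ℝ) :
    ∃ w : ℝ → ℝ, w 0 = w₀ ∧ StrictMono w ∧ (∀ t, HasDerivAt w (g (w t))⁻¹ t) ∧
      Tendsto w atTop atTop := by
  set G : ℝ → ℝ := fun x => ∫ z in w₀..x, g z with hG
  have hG' : ∀ x, HasDerivAt G (g x) x := fun x =>
    intervalIntegral.integral_hasDerivAt_right (hg.intervalIntegrable _ _)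
      hg.aestronglyMeasurable.stronglyMeasurableAtFilter hg.continuousAt
  have hGc : Continuous G := continuous_iff_continuousAt.2 fun x => (hG' x).continuousAt
  have hmono : StrictMono G := strictMono_of_deriv_pos fun x => by
    rw [(hG' x).deriv]; exact hδ.trans_le (hgδ x)
  have hG0 : G w₀ = 0 := by simp [hG]
  have hH : Monotone fun x => G x - δ * x := by
    have hd : ∀ x, HasDerivAt (fun x => G x - δ * x) (g x - δ) x := fun x => by
      simpa using (hG' x).fun_sub ((hasDerivAt_id x).const_mul δ)
    refine monotone_of_deriv_nonneg (fun x => (hd x).differentiableAt) fun x => ?_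
    rw [(hd x).deriv]; linarith [hgδ x]
  have htop : Tendsto G atTop atTop := by
    have h1 : Tendsto (fun x : ℝ => δ * x + -(δ * w₀)) atTop atTop :=
      tendsto_atTop_add_const_right _ _ (tendsto_id.const_mul_atTop hδ)
    refine tendsto_atTop_mono' _ ?_ h1
    filter_upwards [eventually_ge_atTop w₀] with x hx
    have := hH hx
    simp only [hG0] at this
    linarith
  have hbot : Tendsto G atBot atBot := by
    have h1 : Tendsto (fun x : ℝ => δ * x + -(δ * w₀)) atBot atBot :=
      tendsto_atBot_add_const_right _ _ (tendsto_id.const_mul_atBot hδ)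
    refine tendsto_atBot_mono' _ ?_ h1
    filter_upwards [eventually_le_atBot w₀] with x hx
    have := hH hx
    simp only [hG0] at this
    linarith
  let e : ℝ ≃o ℝ := hmono.orderIsoOfSurjective G (hGc.surjective htop hbot)
  have he : ∀ x, e x = G x := fun x => rfl
  have heG : ∀ t, G (e.symm t) = t := fun t => by rw [← he, e.apply_symm_apply]
  refine ⟨e.symm, ?_, e.symm.strictMono, fun t => ?_, e.symm.tendsto_atTop⟩
  · rw [← hG0, ← he, e.symm_apply_apply]
  · exact HasDerivAt.of_local_left_inverse e.symm.continuous.continuousAt (hG' _)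
      (hδ.trans_le (hgδ _)).ne' (Eventually.of_forall heG)

lemma tendsto_div_of_hasDerivAt_tendsto_zero (f f' : ℝ → ℝ) (hf : ∀ t, HasDerivAt f (f' t) t)
    (h : Tendsto f' atTop (𝓝 0)) : Tendsto (fun t => f t / t) atTop (𝓝 0) := by
  rw [Metric.tendsto_atTop]
  intro ε hε
  obtain ⟨T, hT⟩ := Metric.tendsto_atTop.1 h (ε / 2) (by positivity)
  refine ⟨max (max T 1) (4 * |f (max T 1)| / ε), fun t ht => ?_⟩
  set T₁ := max T 1
  have hT1 : T₁ ≤ t := (le_max_left _ _).trans ht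
  have ht0 : 0 < t := zero_lt_one.trans_le ((le_max_right T 1).trans hT1)
  have ht2 : 4 * |f T₁| ≤ t * ε := (div_le_iff₀ hε).1 ((le_max_right _ _).trans ht)
  have hb := (convex_Ici T₁).norm_image_sub_le_of_norm_hasDerivWithin_le
    (f := f) (f' := f') (C := ε / 2) (fun x _ => (hf x).hasDerivWithinAt)
    (fun x hx => by
      have := hT x ((le_max_left T 1).trans hx)
      rw [dist_zero_right] at this
      exact this.le) (Set.mem_Ici.2 le_rfl) (Set.mem_Ici.2 hT1)
  rw [Real.norm_eq_abs, Real.norm_eq_abs, abs_of_nonneg (by linarith : 0 ≤ t - T₁)] at hb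
  rw [dist_zero_right, Real.norm_eq_abs, abs_div, abs_of_pos ht0, div_lt_iff₀ ht0]
  have h1 : |f t| ≤ |f t - f T₁| + |f T₁| := by
    simpa using abs_add_le (f t - f T₁) (f T₁)
  have hT1' : (1 : ℝ) ≤ T₁ := le_max_right T 1
  nlinarith [mul_pos hε ht0]

/-- The fourth root of `1 - x ^ 2`, through which the flow depends on the ratio
`x = (A - B) / (A + B)`. -/
noncomputable def pq (x : ℝ) : ℝ := (1 + x) ^ (1 / 4 : ℝ) * (1 - x) ^ (1 / 4 : ℝ)

lemma continuous_pq : Continuous pq := by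
  unfold pq
  exact ((continuous_const.add continuous_id).rpow_const fun _ => Or.inr (by norm_num)).mul
    ((continuous_const.sub continuous_id).rpow_const fun _ => Or.inr (by norm_num))

lemma pq_pos {x : ℝ} (h0 : 0 < x) (h1 : x < 1) : 0 < pq x :=
  mul_pos (Real.rpow_pos_of_pos (by linarith) _) (Real.rpow_pos_of_pos (by linarith) _)

lemma pq_anti {x y : ℝ} (h0 : 0 < x) (hxy : x ≤ y) (h1 : y < 1) : pq y ≤ pq x := by
  unfold pq
  rw [← Real.mul_rpow (by linarith) (by linarith), ← Real.mul_rpow (by linarith) (by linarith)]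
  exact Real.rpow_le_rpow (by nlinarith) (by nlinarith) (by norm_num)

lemma fourth_root_pow {y : ℝ} (hy : 0 ≤ y) : (y ^ (1 / 4 : ℝ)) ^ 4 = y := by
  rw [← Real.rpow_natCast, ← Real.rpow_mul hy]; norm_num

lemma hasDerivAt_fourth_root {y : ℝ} (hy : 0 < y) :
    HasDerivAt (fun y : ℝ => y ^ (1 / 4 : ℝ)) (y ^ (1 / 4 : ℝ) / (4 * y)) y := by
  have h := Real.hasDerivAt_rpow_const (p := 1 / 4) (Or.inl hy.ne')
  convert h using 1
  rw [Real.rpow_sub_one hy.ne']; field_simp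

/-- The ratio `r = (A - B) / (A + B)` obeys a scalar equation. With `w = r ^ (-6)` it reads
`w' = (384 / K ^ 2) * (pq r) ^ (-10)`, whose right-hand side tends to `384 / K ^ 2`; hence
`w` grows linearly and `r` decays like `t ^ (-1/6)`. -/
lemma exists_ratio (r₀ K : ℝ) (hr₀ : 0 < r₀) (hr₁ : r₀ < 1) (hK : 0 < K) :
    ∃ r : ℝ → ℝ, r 0 = r₀ ∧ (∀ t, 0 ≤ t → 0 < r t ∧ r t < 1) ∧ AntitoneOn r (Set.Ici 0) ∧
      (∀ t, 0 ≤ t → HasDerivAt r (-64 * r t ^ 7 / (K ^ 2 * pq (r t) ^ 10)) t) ∧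
      Tendsto r atTop (𝓝 0) ∧
      Tendsto (fun t : ℝ => t ^ (1 / 6 : ℝ) * r t) atTop (𝓝 ((K ^ 2 / 384) ^ (1 / 6 : ℝ))) := by
  set κ : ℝ := K ^ 2 / 384 with hκ
  have hκ0 : 0 < κ := by positivity
  set w₀ : ℝ := (r₀ ^ 6)⁻¹ with hw₀
  have hw₀1 : 1 < w₀ := (one_lt_inv₀ (by positivity)).2 (pow_lt_one₀ hr₀.le hr₁ (by norm_num))
  -- A level strictly between the singular value `1` and `w₀`; below it the speed is frozen.
  set m : ℝ := (1 + w₀) / 2 with hm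
  have hm1 : 1 < m := by linarith
  have hmw : m < w₀ := by linarith
  set X : ℝ → ℝ := fun z => (max z m) ^ (-(1 / 6) : ℝ) with hX
  have hmax : ∀ z, m ≤ max z m := fun z => le_max_right _ _
  have hXc : Continuous X := by
    refine (continuous_id.max continuous_const).rpow_const fun z => Or.inl ?_
    have := hmax z
    simp only [id]
    linarith
  have hX0 : ∀ z, 0 < X z := fun z => Real.rpow_pos_of_pos (by linarith [hmax z]) _
  set x₁ : ℝ := m ^ (-(1 / 6) : ℝ) with hx₁
  have hx₁1 : x₁ < 1 := Real.rpow_lt_one_of_one_lt_of_neg hm1 (by norm_num)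
  have hx₁0 : 0 < x₁ := Real.rpow_pos_of_pos (by linarith) _
  have hX1 : ∀ z, X z ≤ x₁ := fun z =>
    Real.rpow_le_rpow_of_nonpos (by linarith) (hmax z) (by norm_num)
  set g : ℝ → ℝ := fun z => κ * pq (X z) ^ 10 with hg
  have hgc : Continuous g := continuous_const.mul ((continuous_pq.comp hXc).pow 10)
  have hp₁ := pq_pos hx₁0 hx₁1
  have hgδ : ∀ z, κ * pq x₁ ^ 10 ≤ g z := fun z => by
    have := pq_anti (hX0 z) (hX1 z) hx₁1
    simp only [hg]
    gcongr
  obtain ⟨w, hw0, hwm, hwd, hwt⟩ := exists_quadrature g hgc _ (by positivity) hgδ w₀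
  have hwge : ∀ t, 0 ≤ t → w₀ ≤ w t := fun t ht => hw0 ▸ hwm.monotone ht
  have hXw : ∀ t, 0 ≤ t → X (w t) = (w t) ^ (-(1 / 6) : ℝ) := fun t ht => by
    simp only [hX]; rw [max_eq_left (hmw.le.trans (hwge t ht))]
  have hr0t : Tendsto (fun t => (w t) ^ (-(1 / 6) : ℝ)) atTop (𝓝 0) :=
    (tendsto_rpow_neg_atTop (by norm_num)).comp hwt
  have hev : (fun t => X (w t)) =ᶠ[atTop] fun t => (w t) ^ (-(1 / 6) : ℝ) := by
    filter_upwards [eventually_ge_atTop 0] with t ht using hXw t ht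
  have hpq0 : pq 0 = 1 := by simp [pq]
  have hglim : Tendsto (fun t => (g (w t))⁻¹) atTop (𝓝 κ⁻¹) := by
    refine Tendsto.inv₀ ?_ hκ0.ne'
    have h1 : Tendsto (fun t => pq (X (w t))) atTop (𝓝 1) := by
      rw [← hpq0]
      exact (continuous_pq.tendsto 0).comp (hr0t.congr' hev.symm)
    simpa using (h1.pow 10).const_mul κ
  have hwlin : Tendsto (fun t => w t / t) atTop (𝓝 κ⁻¹) := by
    have h1 := tendsto_div_of_hasDerivAt_tendsto_zero (fun t => w t - κ⁻¹ * t)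
      (fun t => (g (w t))⁻¹ - κ⁻¹)
      (fun t => by simpa using (hwd t).fun_sub ((hasDerivAt_id t).const_mul κ⁻¹))
      (by simpa using hglim.sub_const κ⁻¹)
    have h2 := h1.add_const κ⁻¹
    rw [zero_add] at h2
    refine h2.congr' ?_
    filter_upwards [eventually_gt_atTop 0] with t ht
    field_simp
    ring
  refine ⟨fun t => (w t) ^ (-(1 / 6) : ℝ), ?_, fun t ht => ?_, ?_, fun t ht => ?_, hr0t, ?_⟩
  · simp only [hw0, hw₀]
    rw [Real.rpow_neg (by positivity), Real.inv_rpow (by positivity), inv_inv,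
      ← Real.rpow_natCast, ← Real.rpow_mul hr₀.le]
    norm_num
  · have := hwge t ht
    exact ⟨Real.rpow_pos_of_pos (by linarith) _,
      Real.rpow_lt_one_of_one_lt_of_neg (by linarith) (by norm_num)⟩
  · intro s hs t ht hst
    have := hwge s hs
    exact Real.rpow_le_rpow_of_nonpos (by linarith) (hwm.monotone hst) (by norm_num)
  · have hwpos : 0 < w t := by linarith [hwge t ht]
    have hd := (hwd t).rpow_const (p := -(1 / 6)) (Or.inl hwpos.ne')
    convert hd using 1
    simp only [hg, hXw t ht]
    set x := (w t) ^ (-(1 / 6) : ℝ) with hx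
    have h7 : (w t) ^ (-(1 / 6) - 1 : ℝ) = x ^ 7 := by
      rw [hx, ← Real.rpow_natCast, ← Real.rpow_mul hwpos.le]; norm_num
    have hx0 : 0 < x := Real.rpow_pos_of_pos hwpos _
    have hx1 : x < 1 :=
      Real.rpow_lt_one_of_one_lt_of_neg (by linarith [hwge t ht]) (by norm_num)
    have := pq_pos hx0 hx1
    rw [h7, hκ]
    field_simp
    norm_num
  · have h1 : Tendsto (fun t => (w t / t) ^ (-(1 / 6) : ℝ)) atTop
        (𝓝 (κ⁻¹ ^ (-(1 / 6) : ℝ))) :=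
      hwlin.rpow_const (Or.inl (by positivity))
    have h2 : κ⁻¹ ^ (-(1 / 6) : ℝ) = κ ^ (1 / 6 : ℝ) := by
      rw [Real.inv_rpow hκ0.le, Real.rpow_neg hκ0.le, inv_inv]
    rw [h2] at h1
    refine h1.congr' ?_
    filter_upwards [eventually_gt_atTop 0] with t ht
    have hwpos : 0 < w t := by linarith [hwge t ht.le]
    rw [Real.div_rpow hwpos.le ht.le, Real.rpow_neg ht.le, div_inv_eq_mul, mul_comm]

/-- The flow in terms of the ratio: `A = E p³ / q`, `B = E q³ / p`, `C = K (p q)³ / r²` with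
`p = (1 + r) ^ (1/4)`, `q = (1 - r) ^ (1/4)` solves the system as soon as `r` solves its scalar
equation. -/
lemma isSol_of_ratio (r : ℝ → ℝ) (E K : ℝ) (hE : 0 < E) (hK : 0 < K)
    (h01 : ∀ t, 0 ≤ t → 0 < r t ∧ r t < 1)
    (hr : ∀ t, 0 ≤ t → HasDerivAt r (-64 * r t ^ 7 / (K ^ 2 * pq (r t) ^ 10)) t) :
    IsSolE2 (fun t => E * ((1 + r t) ^ (1 / 4 : ℝ)) ^ 3 / (1 - r t) ^ (1 / 4 : ℝ))
      (fun t => E * ((1 - r t) ^ (1 / 4 : ℝ)) ^ 3 / (1 + r t) ^ (1 / 4 : ℝ))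
      (fun t => K * pq (r t) ^ 3 / r t ^ 2) (Set.Ici 0) := by
  intro t ht
  obtain ⟨h0, h1⟩ := h01 t ht
  have hp0 : 0 < 1 + r t := by linarith
  have hq0 : 0 < 1 - r t := by linarith
  have hrt := hr t ht
  have hP := (hasDerivAt_fourth_root hp0).comp t (hrt.const_add 1)
  have hQ := (hasDerivAt_fourth_root hq0).comp t (hrt.const_sub 1)
  have hPQ := hP.fun_mul hQ
  simp only [Function.comp_def, pq] at hP hQ hPQ ⊢
  have hp4 := fourth_root_pow hp0.le
  have hq4 := fourth_root_pow hq0.le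
  have hp : 0 < (1 + r t) ^ (1 / 4 : ℝ) := Real.rpow_pos_of_pos hp0 _
  have hq : 0 < (1 - r t) ^ (1 / 4 : ℝ) := Real.rpow_pos_of_pos hq0 _
  have hA := ((hP.fun_pow 3).const_mul E).fun_div hQ hq.ne'
  have hB := ((hQ.fun_pow 3).const_mul E).fun_div hP hp.ne'
  have hC := ((hPQ.fun_pow 3).const_mul K).fun_div (hrt.fun_pow 2) (by positivity)
  simp only [pq] at hA hB hC
  refine ⟨⟨by positivity, by positivity, by positivity⟩, ?_, ?_, ?_⟩
  all_goals
    generalize (1 + r t) ^ (1 / 4 : ℝ) = p at *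
    generalize (1 - r t) ^ (1 / 4 : ℝ) = q at *
    generalize r t = x at *
    have hD : E * p ^ 3 / q - E * q ^ 3 / p = 2 * E * x / (p * q) := by
      field_simp; linear_combination hp4 - hq4
    have hD' : E * q ^ 3 / p - E * p ^ 3 / q = -(2 * E * x) / (p * q) := by
      field_simp; linear_combination hq4 - hp4
    have hS : 3 * (E * q ^ 3 / p) + E * p ^ 3 / q = 2 * E * (2 - x) / (p * q) := by
      field_simp; linear_combination hp4 + 3 * hq4
    have hS' : 3 * (E * p ^ 3 / q) + E * q ^ 3 / p = 2 * E * (2 + x) / (p * q) := by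
      field_simp; linear_combination 3 * hp4 + hq4
  · refine hA.congr_deriv ?_
    rw [hD, hS, ← hp4, ← hq4]
    field_simp
    push_cast
    linear_combination (-64 * p ^ 2) * (hp4 + 3 * hq4)
  · refine hB.congr_deriv ?_
    rw [hD', hS', ← hp4, ← hq4]
    field_simp
    push_cast
    linear_combination (64 * q ^ 2) * (3 * hp4 + hq4)
  · refine hC.congr_deriv ?_
    rw [hD, hS, hS', ← hp4, ← hq4]
    field_simp
    push_cast
    linear_combination 64 * p ^ 2 * q ^ 2 * x *
      (3 * x * (hp4 - hq4) + 8 * (q ^ 4 * hp4 + (1 + x) * hq4))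

lemma sub_fourth_roots (E : ℝ) {x : ℝ} (h0 : 0 < x) (h1 : x < 1) :
    E * ((1 + x) ^ (1 / 4 : ℝ)) ^ 3 / (1 - x) ^ (1 / 4 : ℝ) -
      E * ((1 - x) ^ (1 / 4 : ℝ)) ^ 3 / (1 + x) ^ (1 / 4 : ℝ) = 2 * E * x / pq x := by
  have hp : 0 < (1 + x) ^ (1 / 4 : ℝ) := Real.rpow_pos_of_pos (by linarith) _
  have hq : 0 < (1 - x) ^ (1 / 4 : ℝ) := Real.rpow_pos_of_pos (by linarith) _
  have hp4 := fourth_root_pow (by linarith : 0 ≤ 1 + x)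
  have hq4 := fourth_root_pow (by linarith : 0 ≤ 1 - x)
  unfold pq
  generalize (1 + x) ^ (1 / 4 : ℝ) = p at *
  generalize (1 - x) ^ (1 / 4 : ℝ) = q at *
  field_simp
  linear_combination E * (hp4 - hq4)

/-- For any initial data `A0 > B0 > 0`, `C0 > 0`, the `E(2)` negative cross curvature
flow has a positive solution on all of `[0, ∞)` with `B0 ≤ B < A ≤ A0`, `C` increasing
to `∞`, `(A - B)²C` increasing to a finite positive limit, and the asymptotics
`A ∼ E1 + E2 t^{-1/6}`, `B ∼ E1 - E2 t^{-1/6}`, `C ∼ (8E2/E1)√6 · t^{1/3}` as `t → ∞`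
for some positive constants `E1, E2`. -/
theorem e2_global_asymptotics
    (A0 B0 C0 : ℝ) (hB0 : 0 < B0) (hA0B0 : A0 > B0) (hC0 : 0 < C0) :
    ∃ A B C : ℝ → ℝ,
      A 0 = A0 ∧ B 0 = B0 ∧ C 0 = C0 ∧
      IsSolE2 A B C (Set.Ici (0 : ℝ)) ∧
      (∀ t : ℝ, 0 ≤ t → B0 ≤ B t ∧ B t < A t ∧ A t ≤ A0) ∧
      MonotoneOn C (Set.Ici (0 : ℝ)) ∧
      Filter.Tendsto C Filter.atTop Filter.atTop ∧
      MonotoneOn (fun t => (A t - B t) ^ 2 * C t) (Set.Ici (0 : ℝ)) ∧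
      (∃ L : ℝ, 0 < L ∧
        Filter.Tendsto (fun t => (A t - B t) ^ 2 * C t) Filter.atTop (nhds L)) ∧
      ∃ E1 E2 : ℝ, 0 < E1 ∧ 0 < E2 ∧
        Filter.Tendsto (fun t : ℝ => t ^ ((1 : ℝ) / 6) * (A t - E1))
          Filter.atTop (nhds E2) ∧
        Filter.Tendsto (fun t : ℝ => t ^ ((1 : ℝ) / 6) * (B t - E1))
          Filter.atTop (nhds (-E2)) ∧
        Filter.Tendsto (fun t : ℝ => C t / t ^ ((1 : ℝ) / 3))
          Filter.atTop (nhds (8 * E2 / E1 * Real.sqrt 6)) := by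
  set r₀ : ℝ := (A0 - B0) / (A0 + B0) with hr₀
  have hA0 : 0 < A0 := hB0.trans hA0B0
  have hr₀0 : 0 < r₀ := div_pos (by linarith) (by linarith)
  have hr₀1 : r₀ < 1 := (div_lt_one (by linarith)).2 (by linarith)
  set p₀ : ℝ := (1 + r₀) ^ (1 / 4 : ℝ) with hp₀
  set q₀ : ℝ := (1 - r₀) ^ (1 / 4 : ℝ) with hq₀
  have hp₀0 : 0 < p₀ := Real.rpow_pos_of_pos (by linarith) _
  have hq₀0 : 0 < q₀ := Real.rpow_pos_of_pos (by linarith) _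
  have hp₀4 : p₀ ^ 4 = 1 + r₀ := fourth_root_pow (by linarith)
  have hq₀4 : q₀ ^ 4 = 1 - r₀ := fourth_root_pow (by linarith)
  have hpq₀ : 0 < pq r₀ := pq_pos hr₀0 hr₀1
  -- The two first integrals of the system, evaluated at the initial data.
  set E : ℝ := A0 * q₀ / p₀ ^ 3 with hE
  set K : ℝ := C0 * r₀ ^ 2 / pq r₀ ^ 3 with hK
  have hE0 : 0 < E := by positivity
  have hK0 : 0 < K := by positivity
  obtain ⟨r, hr0, h01, hanti, hrd, hrlim, hrasy⟩ := exists_ratio r₀ K hr₀0 hr₀1 hK0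
  set ρ : ℝ := (K ^ 2 / 384) ^ (1 / 6 : ℝ) with hρ
  have hρ0 : 0 < ρ := Real.rpow_pos_of_pos (by positivity) _
  have hρ6 : (ρ ^ 3) ^ 2 = K ^ 2 / 384 := by
    rw [hρ, ← pow_mul, ← Real.rpow_natCast, ← Real.rpow_mul (by positivity)]; norm_num
  have hKρ : K = 8 * √6 * ρ ^ 3 := by
    refine (pow_left_inj₀ hK0.le (by positivity) two_ne_zero).1 ?_
    rw [mul_pow, mul_pow, hρ6, Real.sq_sqrt (by norm_num)]; ring
  have hsol := isSol_of_ratio r E K hE0 hK0 h01 hrd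
  have hAr : r₀ * (A0 + B0) = A0 - B0 := by rw [hr₀]; field_simp
  have hle : ∀ t, 0 ≤ t → r t ≤ r₀ := fun t ht =>
    hr0 ▸ hanti (Set.mem_Ici.2 le_rfl) (Set.mem_Ici.2 ht) ht
  have hA00 : E * p₀ ^ 3 / q₀ = A0 := by rw [hE]; field_simp
  have hB00 : E * q₀ ^ 3 / p₀ = B0 := by
    rw [hE]; field_simp; rw [hp₀4, hq₀4]; linarith
  have hprod : ∀ t, 0 ≤ t →
      (E * ((1 + r t) ^ (1 / 4 : ℝ)) ^ 3 / (1 - r t) ^ (1 / 4 : ℝ) -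
        E * ((1 - r t) ^ (1 / 4 : ℝ)) ^ 3 / (1 + r t) ^ (1 / 4 : ℝ)) ^ 2 *
        (K * pq (r t) ^ 3 / r t ^ 2) = 4 * E ^ 2 * K * pq (r t) := by
    intro t ht
    obtain ⟨h0, h1⟩ := h01 t ht
    rw [sub_fourth_roots E h0 h1]
    have := pq_pos h0 h1
    field_simp
    ring
  have hpqlim : Tendsto (fun t => pq (r t)) atTop (𝓝 1) := by
    have h := (continuous_pq.tendsto 0).comp hrlim
    rwa [show pq 0 = 1 by simp [pq]] at h
  have hrne : Tendsto r atTop (𝓝[≠] 0) := by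
    refine tendsto_nhdsWithin_iff.2 ⟨hrlim, ?_⟩
    filter_upwards [eventually_ge_atTop 0] with t ht using (h01 t ht).1.ne'
  have hasy : ∀ (φ : ℝ → ℝ) (d : ℝ), HasDerivAt φ d 0 → φ 0 = E →
      Tendsto (fun t : ℝ => t ^ ((1 : ℝ) / 6) * (φ (r t) - E)) atTop (𝓝 (ρ * d)) := by
    intro φ d hφ hφ0
    have h1 := (hasDerivAt_iff_tendsto_slope_zero.1 hφ).comp hrne
    refine (hrasy.mul h1).congr' ?_
    filter_upwards [eventually_ge_atTop 0] with t ht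
    have := (h01 t ht).1.ne'
    simp only [Function.comp, zero_add, hφ0, smul_eq_mul]
    field_simp
  have hroot0 : HasDerivAt (fun y : ℝ => y ^ (1 / 4 : ℝ)) (1 / 4) 1 := by
    simpa using hasDerivAt_fourth_root one_pos
  have hP0 : HasDerivAt (fun x : ℝ => (1 + x) ^ (1 / 4 : ℝ)) (1 / 4) 0 := by
    have h := HasDerivAt.comp (0 : ℝ) (by simpa using hroot0) ((hasDerivAt_id (0 : ℝ)).const_add 1)
    simpa [Function.comp_def] using h
  have hQ0 : HasDerivAt (fun x : ℝ => (1 - x) ^ (1 / 4 : ℝ)) (-(1 / 4)) 0 := by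
    have h := HasDerivAt.comp (0 : ℝ) (by simpa using hroot0) ((hasDerivAt_id (0 : ℝ)).const_sub 1)
    simpa [Function.comp_def] using h
  have hφA : HasDerivAt
      (fun x : ℝ => E * ((1 + x) ^ (1 / 4 : ℝ)) ^ 3 / (1 - x) ^ (1 / 4 : ℝ)) E 0 :=
    (((hP0.fun_pow 3).const_mul E).fun_div hQ0 (by simp)).congr_deriv (by simp; ring)
  have hφB : HasDerivAt
      (fun x : ℝ => E * ((1 - x) ^ (1 / 4 : ℝ)) ^ 3 / (1 + x) ^ (1 / 4 : ℝ)) (-E) 0 :=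
    (((hQ0.fun_pow 3).const_mul E).fun_div hP0 (by simp)).congr_deriv (by simp; ring)
  have hC3 : Tendsto (fun t : ℝ => K * pq (r t) ^ 3 / r t ^ 2 / t ^ ((1 : ℝ) / 3)) atTop
      (𝓝 (8 * (ρ * E) / E * √6)) := by
    have h1 : Tendsto (fun t : ℝ => K * pq (r t) ^ 3 / (t ^ (1 / 6 : ℝ) * r t) ^ 2) atTop
        (𝓝 (K * 1 ^ 3 / ρ ^ 2)) :=
      ((hpqlim.pow 3).const_mul K).div (hrasy.pow 2) (by positivity)
    have h2 : K * 1 ^ 3 / ρ ^ 2 = 8 * (ρ * E) / E * √6 := by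
      rw [hKρ]; field_simp
    rw [h2] at h1
    refine h1.congr' ?_
    filter_upwards [eventually_ge_atTop 0] with t ht
    have h3 : (t ^ (1 / 6 : ℝ)) ^ 2 = t ^ ((1 : ℝ) / 3) := by
      rw [← Real.rpow_natCast, ← Real.rpow_mul ht]; norm_num
    rw [mul_pow, h3, mul_comm (t ^ ((1 : ℝ) / 3)), div_div]
  refine ⟨_, _, _, ?_, ?_, ?_, hsol, fun t ht => ⟨?_, ?_, ?_⟩, ?_, ?_, ?_,
    ⟨4 * E ^ 2 * K, by positivity, ?_⟩, E, ρ * E, hE0, by positivity,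
    hasy _ _ hφA (by simp), ?_, hC3⟩
  · simp only [hr0]; exact hA00
  · simp only [hr0]; exact hB00
  · simp only [hr0]; rw [hK]; field_simp
  · obtain ⟨h0, h1⟩ := h01 t ht
    have h2 := hle t ht
    rw [← hB00, hp₀, hq₀]
    have h3 : 0 < 1 - r₀ := by linarith
    have h4 : 0 < 1 + r t := by linarith
    gcongr
  · obtain ⟨h0, h1⟩ := h01 t ht
    have := pq_pos h0 h1
    rw [← sub_pos, sub_fourth_roots E h0 h1]
    positivity
  · obtain ⟨h0, h1⟩ := h01 t ht
    have h2 := hle t ht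
    rw [← hA00, hp₀, hq₀]
    have h3 : 0 < 1 - r₀ := by linarith
    have h4 : 0 < 1 + r t := by linarith
    gcongr
  · intro s hs t ht hst
    obtain ⟨h0, h1⟩ := h01 s hs
    obtain ⟨h0', h1'⟩ := h01 t ht
    have h2 := hanti hs ht hst
    have h3 := pq_anti h0' h2 h1
    have := pq_pos h0 h1
    have := pq_pos h0' h1'
    simp only
    gcongr
  · have h1 : Tendsto (fun t : ℝ => t ^ ((1 : ℝ) / 3)) atTop atTop :=
      tendsto_rpow_atTop (by norm_num)
    refine (h1.atTop_mul_pos (by positivity) hC3).congr' ?_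
    filter_upwards [eventually_gt_atTop 0] with t ht
    have := Real.rpow_pos_of_pos ht ((1 : ℝ) / 3)
    field_simp
  · intro s hs t ht hst
    simp only
    rw [hprod s hs, hprod t ht]
    have h3 := pq_anti (h01 t ht).1 (hanti hs ht hst) (h01 s hs).2
    gcongr
  · have h1 := hpqlim.const_mul (4 * E ^ 2 * K)
    rw [mul_one] at h1
    refine h1.congr' ?_
    filter_upwards [eventually_ge_atTop 0] with t ht using (hprod t ht).symm
  · have h1 := hasy _ _ hφB (by simp)
    rwa [mul_neg] at h1
end
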